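/- arXiv:2103.00425 — 2 statements merged into one kernel-verified Lean document; each statement's English description precedes it below -/
import Mathlib

section
/- Let G be a finite Frobenius group with Frobenius kernel K and Frobenius complement H, and assume that H is not nilpotent and that every prime divisor of |H| is 2 or 5. Then G has perfect order classes if, and only if, K is a homocyclic 3-group of rank 4 (i.e., isomorphic to a direct product of four copies of a cyclic group of order 3^k for some positive integer k) and H is isomorphic to the metacyclic group ⟨a, b | a^5 = 1, b^{16} = 1, b⁻¹ a b = a^4⟩ of order 80. -/
/-- The number of elements of order `n` in the group `G`. -/
noncomputable def orderCount (G : Type*) [Group G] (n : ℕ) : ℕ :=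
  Nat.card {g : G // orderOf g = n}

/-- A group has *perfect order classes* if, for every positive integer `n`, the number of
elements of order `n` is either zero or a divisor of the order of the group. -/
def PerfectOrderClasses (G : Type*) [Group G] : Prop :=
  ∀ n : ℕ, 0 < n → orderCount G n = 0 ∨ orderCount G n ∣ Nat.card G

/-- `G` is a Frobenius group with Frobenius kernel `K` and Frobenius complement `H`:
`K` is a nontrivial proper normal subgroup, `H` a subgroup with `K ⊓ H = ⊥` and `KH = G`,
and the conjugation action of `H` on `K` is fixed-point-free. -/
def IsFrobeniusWith {G : Type*} [Group G] (K H : Subgroup G) : Prop :=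
  K ≠ ⊥ ∧ K ≠ ⊤ ∧ K.Normal ∧ K ⊓ H = ⊥ ∧
    (∀ g : G, ∃ k ∈ K, ∃ h ∈ H, g = k * h) ∧
    ∀ h ∈ H, h ≠ 1 → ∀ k ∈ K, k ≠ 1 → h * k * h⁻¹ ≠ k

/-- Relations of the metacyclic group `⟨a, b ∣ a^m = 1, b^n = 1, b⁻¹ a b = a^e⟩`,
with `a` the generator indexed by `true` and `b` the one indexed by `false`. -/
def metacyclicRels (m n : ℕ) (e : ℤ) : Set (FreeGroup Bool) :=
  {FreeGroup.of true ^ m, FreeGroup.of false ^ n,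
    (FreeGroup.of false)⁻¹ * FreeGroup.of true * FreeGroup.of false *
      (FreeGroup.of true ^ e)⁻¹}

/-- The metacyclic group `⟨a, b ∣ a^m = 1, b^n = 1, b⁻¹ a b = a^e⟩`. -/
abbrev Metacyclic (m n : ℕ) (e : ℤ) : Type := PresentedGroup (metacyclicRels m n e)

/-!
`G` is the disjoint union of `K` and the cosets `K h` with `1 ≠ h ∈ H`, all of whose elements are
conjugate to `h`. So `G` has perfect order classes iff `H` has and, for `n ≠ 1`, the number of
elements of order `n` in `K` is zero or divides `|K| |H|`; this number is always a multiple of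
`|H|`, because `H` acts freely on the nontrivial elements of `K`.

Since `|H|` is even, an involution of `H` inverts `K`, which is therefore abelian. Counting elements
of orders `p`, `q` and `p q` shows that `K` is a `p`-group. It has exactly `|H|` elements of order
`p`, so every nontrivial `H`-invariant subgroup of `K` contains all of them; applied to the
subgroups `Kⁿ` this makes `K` homocyclic, and `|H| + 1 = p ^ r` with `r` the rank of `K`. As `|H|`
is a `{2, 5}`-number divisible by `10` and `r > 1`, this forces `p ^ r = 3 ^ 4` and `|H| = 80`.

The Sylow `5`-subgroup `⟨a⟩` of `H` is normal and acts irreducibly on the elements of `K` of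
order dividing `3`. By Schur's lemma the centralizer of `a` embeds in the multiplicative group of
`𝔽₈₁`, so it is cyclic; the normalizer acts on it by powers of `x ↦ x³`. Since `H` is not abelian,
the centralizer has index `2`, and since `H` has only one involution there is an element of order
`16` outside it.
-/

theorem exists_eq_pow_of_not_dvd {p q n : ℕ} (hn : n ≠ 0)
    (hpq : ∀ l : ℕ, l.Prime → l ∣ n → l = p ∨ l = q) (hq : ¬ q ∣ n) : ∃ k, n = p ^ k :=
  ⟨_, Nat.eq_prime_pow_of_unique_prime_dvd hn fun {l} hl hln =>
    (hpq l hl hln).resolve_right (by rintro rfl; exact hq hln)⟩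

theorem dvd_card_of_not_isNilpotent {G : Type*} [Group G] [Finite G] {p q : ℕ} (hp : p.Prime)
    (hpq : ∀ l : ℕ, l.Prime → l ∣ Nat.card G → l = p ∨ l = q) (hG : ¬ Group.IsNilpotent G) :
    q ∣ Nat.card G := by
  by_contra hq
  have : Fact p.Prime := ⟨hp⟩
  obtain ⟨k, hk⟩ := exists_eq_pow_of_not_dvd Nat.card_pos.ne' hpq hq
  exact hG (IsPGroup.of_card hk).isNilpotent

theorem eq_two_of_five_pow_eq {i j : ℕ} (h : 5 ^ j = 2 ^ i + 1) : i = 2 := by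
  have hi : i < 3 := by
    by_contra! hi
    obtain ⟨t, ht⟩ : 8 ∣ 2 ^ i := pow_dvd_pow 2 hi
    rw [ht] at h
    have hj : Even j := by
      by_contra hj
      obtain ⟨l, rfl⟩ := Nat.not_even_iff_odd.mp hj
      have h5 : 5 ^ (2 * l + 1) % 8 = 5 := by
        rw [pow_succ, pow_mul, Nat.mul_mod, Nat.pow_mod]
        norm_num
      rw [h] at h5
      omega
    obtain ⟨l, rfl⟩ := hj.two_dvd
    have h3 : 5 ^ (2 * l) % 3 = 1 := by
      rw [pow_mul, Nat.pow_mod]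
      norm_num
    exact absurd (Nat.prime_three.dvd_of_dvd_pow (show 3 ∣ 2 ^ i by omega)) (by norm_num)
  have hj : j ≠ 0 := by
    rintro rfl
    exact absurd h (by simp)
  have h5 : 5 ∣ 5 ^ j := dvd_pow_self 5 hj
  interval_cases i <;> omega

theorem eq_one_of_two_pow_eq {i j : ℕ} (h : 2 ^ i = 5 ^ j + 1) : i = 1 := by
  have h4 : 5 ^ j % 4 = 1 := by
    rw [Nat.pow_mod]
    norm_num
  have hi : i < 2 := by
    by_contra! hi
    have : 2 ^ 2 ∣ 2 ^ i := pow_dvd_pow 2 hi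
    omega
  interval_cases i <;> omega

theorem eq_four_of_mul_succ {s : ℕ} (h5 : 5 ∣ s * (s + 1))
    (hs : ∀ l : ℕ, l.Prime → l ∣ s * (s + 1) → l = 2 ∨ l = 5) (hs0 : s ≠ 0) : s = 4 := by
  have hs' (l : ℕ) (hl : l.Prime) (hd : l ∣ s * (s + 1)) : l = 5 ∨ l = 2 := (hs l hl hd).symm
  have left {p q : ℕ} (h : ∀ l : ℕ, l.Prime → l ∣ s * (s + 1) → l = p ∨ l = q)
      (hq : ¬ q ∣ s) : ∃ k, s = p ^ k :=
    exists_eq_pow_of_not_dvd hs0 (fun l hl hd => h l hl (hd.mul_right _)) hq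
  have right {p q : ℕ} (h : ∀ l : ℕ, l.Prime → l ∣ s * (s + 1) → l = p ∨ l = q)
      (hq : ¬ q ∣ s + 1) : ∃ k, s + 1 = p ^ k :=
    exists_eq_pow_of_not_dvd s.succ_ne_zero (fun l hl hd => h l hl (hd.mul_left _)) hq
  by_cases h5s : 5 ∣ s
  · obtain ⟨i, hi⟩ := right hs (by omega)
    have h2s : ¬ 2 ∣ s := by
      intro h2
      rcases i with _ | i
      · omega
      · rw [pow_succ] at hi
        omega
    obtain ⟨j, hj⟩ := left hs' h2s
    have := eq_one_of_two_pow_eq (hj ▸ hi.symm : 2 ^ i = 5 ^ j + 1)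
    subst this
    omega
  · have h5s' : 5 ∣ s + 1 := (Nat.prime_five.dvd_mul.mp h5).resolve_left h5s
    obtain ⟨i, hi⟩ := left hs h5s
    have h2s : ¬ 2 ∣ s + 1 := by
      intro h2
      rcases i with _ | i
      · omega
      · rw [pow_succ] at hi
        omega
    obtain ⟨j, hj⟩ := right hs' h2s
    rw [hi, eq_two_of_five_pow_eq (hi ▸ hj.symm : 5 ^ j = 2 ^ i + 1)]
    rfl

theorem lt_geom_sum {x r : ℕ} (hx : x ≠ 0) (hr : 1 < r) :
    r < ∑ i ∈ Finset.range r, (x + 1) ^ i := by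
  simpa using Finset.sum_lt_sum (f := fun _ => 1) (s := Finset.range r)
    (fun i _ => Nat.one_le_pow i (x + 1) x.succ_pos)
    ⟨1, Finset.mem_range.mpr hr, by rw [pow_one]; omega⟩

theorem geom_sum_ne_prime_pow {q x r : ℕ} (hq : q.Prime) (hq2 : q ≠ 2) (hqx : q ∣ x) (hx : x ≠ 0)
    (hr : 1 < r) (j : ℕ) : ∑ i ∈ Finset.range r, (x + 1) ^ i ≠ q ^ j := by
  intro hS
  have : Fact q.Prime := ⟨hq⟩
  have hrS := lt_geom_sum hx hr
  have hgeom := geom_sum_mul_add x r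
  rw [hS] at hrS hgeom
  -- Lifting the exponent: `q ^ j` and `r` have the same `q`-adic valuation.
  have hval : padicValNat q (q ^ j) = padicValNat q r := by
    have hlte := padicValNat.pow_sub_pow (x := x + 1) (y := 1) (hq.odd_of_ne_two hq2) (by omega)
      (by simpa using hqx) (fun h => hq.not_dvd_one ((Nat.dvd_add_right hqx).mp h))
      (n := r) (by omega)
    rw [one_pow, ← hgeom, Nat.add_sub_cancel, Nat.add_sub_cancel,
      padicValNat.mul (pow_ne_zero _ hq.ne_zero) hx] at hlte
    omega
  have hdvd : q ^ j ∣ r := by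
    rw [padicValNat_dvd_iff_le (by omega), ← hval, padicValNat.prime_pow]
  exact absurd (Nat.le_of_dvd (by omega) hdvd) (by omega)

theorem not_odd_of_pow_eq {p r n : ℕ} (hr : 1 < r) (h2 : 2 ∣ n)
    (hn : ∀ l : ℕ, l.Prime → l ∣ n → l = 2 ∨ l = 5) (hn0 : n ≠ 0) (h : n + 1 = p ^ r) :
    ¬ Odd r := by
  intro hodd
  have hpodd : Odd p := by
    rw [← Nat.odd_pow_iff (show r ≠ 0 by omega), ← h, Nat.odd_iff]
    omega
  obtain ⟨x, rfl⟩ : ∃ x, p = x + 1 := ⟨p - 1, by have := hpodd.pos; omega⟩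
  have hx : x ≠ 0 := by
    rintro rfl
    exact hn0 (by simpa using h)
  set S := ∑ i ∈ Finset.range r, (x + 1) ^ i with hS
  have hSx : S * x = n := by
    have := geom_sum_mul_add x r
    rw [← hS, ← h] at this
    exact Nat.succ_injective this
  have hSodd : Odd S := by
    rw [hS, Finset.odd_sum_iff_odd_card_odd, Finset.filter_true_of_mem (fun i _ => hpodd.pow)]
    simpa using hodd
  obtain ⟨j, hj⟩ : ∃ j, S = 5 ^ j :=
    exists_eq_pow_of_not_dvd hSodd.pos.ne' (q := 2)
      (fun l hl hd => (hn l hl (hSx ▸ hd.mul_right x)).symm) hSodd.not_two_dvd_nat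
  have h5n : 5 ∣ n := by
    have hj0 : j ≠ 0 := by
      rintro rfl
      exact absurd (lt_geom_sum hx hr) (by rw [← hS, hj]; omega)
    exact hSx ▸ (hj ▸ dvd_pow_self 5 hj0).mul_right x
  -- Modulo `5` both `p ^ r` and `p ^ 4` are `1`, and `r` is odd.
  have h5x : 5 ∣ x := by
    have : Fact (Nat.Prime 5) := ⟨Nat.prime_five⟩
    have hpr : ((x + 1 : ℕ) : ZMod 5) ^ r = 1 := by
      rw [← Nat.cast_pow, ← h, Nat.cast_add, (ZMod.natCast_eq_zero_iff n 5).mpr h5n]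
      simp
    have hp4 : ((x + 1 : ℕ) : ZMod 5) ^ 4 = 1 :=
      ZMod.pow_card_sub_one_eq_one fun h0 => by simp [h0, show r ≠ 0 by omega] at hpr
    have hgcd : r.gcd 4 = 1 := Nat.Coprime.pow_right 2 (Nat.coprime_two_right.mpr hodd)
    have := pow_gcd_eq_one.mpr ⟨hpr, hp4⟩
    rw [hgcd, pow_one, Nat.cast_succ, add_eq_right] at this
    exact (ZMod.natCast_eq_zero_iff x 5).mp this
  exact geom_sum_ne_prime_pow Nat.prime_five (by norm_num) h5x hx hr j hj

theorem eq_three_and_four_of_prime_pow_eq {p r n : ℕ} (hp : p.Prime) (hr : 1 < r)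
    (h2 : 2 ∣ n) (h5 : 5 ∣ n) (hn : ∀ l : ℕ, l.Prime → l ∣ n → l = 2 ∨ l = 5)
    (h : n + 1 = p ^ r) : p = 3 ∧ r = 4 := by
  have hn0 : n ≠ 0 := by
    rintro rfl
    exact (Nat.one_lt_pow (by omega) hp.one_lt).ne h
  obtain ⟨t, rfl⟩ := (Nat.not_odd_iff_even.mp (not_odd_of_pow_eq hr h2 hn hn0 h)).two_dvd
  have hodd : Odd (p ^ t) := by
    refine (Nat.odd_pow_iff two_ne_zero).mp ?_
    rw [← pow_mul, mul_comm, ← h]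
    exact Nat.odd_iff.mpr (by omega)
  obtain ⟨s, hs⟩ := hodd
  have hsn : 4 * (s * (s + 1)) = n := by
    have : n + 1 = 4 * (s * (s + 1)) + 1 := by
      rw [h, mul_comm, pow_mul, hs]
      ring
    omega
  have hs4 : s = 4 :=
    eq_four_of_mul_succ (by omega) (fun l hl hd => hn l hl (hsn ▸ hd.mul_left 4))
      (by rintro rfl; omega)
  have h9 : p ^ t = 3 ^ 2 := by
    rw [hs, hs4]
    norm_num
  obtain rfl : p = 3 := (Nat.prime_dvd_prime_iff_eq hp Nat.prime_three).mp
    (hp.dvd_of_dvd_pow (h9 ▸ dvd_pow_self p (by omega)))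
  obtain rfl : t = 2 := Nat.pow_right_injective (by norm_num : 2 ≤ 3) h9
  exact ⟨rfl, rfl⟩

theorem orderCount_ne_zero_iff {G : Type*} [Group G] [Finite G] {n : ℕ} :
    orderCount G n ≠ 0 ↔ ∃ g : G, orderOf g = n :=
  ⟨fun h => nonempty_subtype.mp (Nat.card_ne_zero.mp h).1, fun h =>
    have := nonempty_subtype.mpr h
    Nat.card_pos.ne'⟩

theorem orderCount_congr {G G' : Type*} [Group G] [Group G'] (e : G ≃* G') (n : ℕ) :
    orderCount G n = orderCount G' n :=
  Nat.card_congr (e.toEquiv.subtypeEquiv fun g => by simp)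

theorem PerfectOrderClasses.of_mulEquiv {G G' : Type*} [Group G] [Group G'] (e : G ≃* G')
    (hG : PerfectOrderClasses G) : PerfectOrderClasses G' := fun n hn => by
  rw [← orderCount_congr e, ← Nat.card_congr e.toEquiv]
  exact hG n hn

theorem dvd_natCard_of_orderCount_ne_zero {G : Type*} [Group G] [Finite G] {n : ℕ}
    (h : orderCount G n ≠ 0) : n ∣ Nat.card G := by
  obtain ⟨g, rfl⟩ := orderCount_ne_zero_iff.mp h
  exact orderOf_dvd_natCard g

theorem perfectOrderClasses_of_orderOf_eq_of_notMem {H : Type*} [Group H] [Finite H]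
    {C : Subgroup H} [IsCyclic C] {N : ℕ} (hN : ∀ x ∉ C, orderOf x = N)
    (hNC : ¬ N ∣ Nat.card C) (hC : Nat.card H - Nat.card C ∣ Nat.card H)
    (hφ : (Nat.card C).totient ∣ Nat.card H) : PerfectOrderClasses H := by
  classical
  have hmem (n : ℕ) (hn : n ∣ Nat.card C) (x : H) (hx : orderOf x = n) : x ∈ C := by
    by_contra hxC
    exact hNC (hN x hxC ▸ hx.symm ▸ hn)
  intro n _
  rcases eq_or_ne (orderCount H n) 0 with h0 | h0
  · exact Or.inl h0
  right
  by_cases hn : n ∣ Nat.card C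
  · have := Fintype.ofFinite C
    have e : {x : H // orderOf x = n} ≃ {x : C // orderOf x = n} :=
      { toFun := fun x => ⟨⟨x, hmem n hn x x.2⟩, by rw [Subgroup.orderOf_mk, x.2]⟩
        invFun := fun x => ⟨x, by rw [Subgroup.orderOf_coe, x.2]⟩
        left_inv := fun _ => rfl
        right_inv := fun _ => rfl }
    rw [orderCount, Nat.card_congr e, Nat.card_eq_fintype_card, Fintype.card_subtype,
      IsCyclic.card_orderOf_eq_totient (Nat.card_eq_fintype_card (α := C) ▸ hn)]
    exact (Nat.totient_dvd_of_dvd hn).trans hφ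
  · obtain ⟨x, hx⟩ := orderCount_ne_zero_iff.mp h0
    have hxC (y : H) (hy : orderOf y = n) : y ∉ C := fun h =>
      hn (hy ▸ Subgroup.orderOf_dvd_natCard C h)
    have e : {y : H // orderOf y = n} ≃ ((C : Set H)ᶜ : Set H) :=
      Equiv.subtypeEquivRight fun y =>
        ⟨hxC y, fun hy => (hN y hy).trans (hx ▸ (hN x (hxC x hx)).symm)⟩
    have hcompl := Set.ncard_add_ncard_compl (C : Set H)
    rw [orderCount, Nat.card_congr e]
    change Nat.card C + Nat.card ((C : Set H)ᶜ : Set H) = Nat.card H at hcompl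
    rwa [show Nat.card ((C : Set H)ᶜ : Set H) = Nat.card H - Nat.card C by omega]

theorem sum_orderCount_divisors (G : Type*) [Group G] [Finite G] {n : ℕ} (hn : n ≠ 0) :
    ∑ m ∈ n.divisors, orderCount G m = Nat.card {x : G // x ^ n = 1} := by
  classical
  have := Fintype.ofFinite G
  simp only [orderCount, Nat.card_eq_fintype_card, Fintype.card_subtype]
  exact sum_card_orderOf_eq_card_pow_eq_one hn

theorem card_pow_eq_one_add_orderCount (G : Type*) [Group G] [Finite G] {p : ℕ} (hp : p.Prime)
    (j : ℕ) : Nat.card {x : G // x ^ p ^ j = 1} + orderCount G (p ^ (j + 1)) =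
      Nat.card {x : G // x ^ p ^ (j + 1) = 1} := by
  rw [← sum_orderCount_divisors G (pow_ne_zero j hp.ne_zero),
    ← sum_orderCount_divisors G (pow_ne_zero (j + 1) hp.ne_zero),
    Nat.sum_divisors_prime_pow hp, Nat.sum_divisors_prime_pow hp, Finset.sum_range_succ _ (j + 1)]

theorem orderOf_pow_of_modEq {G : Type*} [Monoid G] {z : G} {m n c : ℕ} (hz : orderOf z = m * n)
    (hm : c ≡ 1 [MOD m]) (hn : c ≡ 0 [MOD n]) (hm0 : m ≠ 0) (hn0 : n ≠ 0) :
    orderOf (z ^ c) = m := by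
  have hgcd : (m * n).gcd c = n := by
    have hmc : m.Coprime c := by rw [Nat.coprime_comm, Nat.Coprime, hm.gcd_eq, Nat.gcd_one_left]
    rw [hmc.gcd_mul_left_cancel n, Nat.gcd_eq_left (Nat.modEq_zero_iff_dvd.mp hn)]
  have hfin : IsOfFinOrder z := orderOf_ne_zero_iff.mp (hz ▸ mul_ne_zero hm0 hn0)
  rw [hfin.orderOf_pow, hz, hgcd, Nat.mul_div_cancel m (Nat.pos_of_ne_zero hn0)]

theorem orderCount_mul_of_coprime {A : Type*} [CommGroup A] {m n : ℕ} (hmn : m.Coprime n)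
    (hm : m ≠ 0) (hn : n ≠ 0) : orderCount A (m * n) = orderCount A m * orderCount A n := by
  obtain ⟨c, hcm, hcn⟩ := Nat.chineseRemainder hmn 1 0
  obtain ⟨d, hdm, hdn⟩ := Nat.chineseRemainder hmn 0 1
  have hcd : c + d ≡ 1 [MOD m * n] :=
    (Nat.modEq_and_modEq_iff_modEq_mul hmn).mp ⟨hcm.add hdm, hcn.add hdn⟩
  rw [orderCount, orderCount, orderCount, ← Nat.card_prod]
  exact Nat.card_congr
    { toFun := fun z => (⟨z ^ c, orderOf_pow_of_modEq z.2 hcm hcn hm hn⟩,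
        ⟨z ^ d, orderOf_pow_of_modEq (by rw [z.2, mul_comm]) hdn hdm hn hm⟩)
      invFun := fun z => ⟨z.1 * z.2, by
        rw [(Commute.all _ _).orderOf_mul_eq_mul_orderOf_of_coprime
          (by rwa [z.1.2, z.2.2]), z.1.2, z.2.2]⟩
      left_inv := fun ⟨z, hz⟩ => Subtype.ext <| by
        change z ^ c * z ^ d = z
        rw [← pow_add, pow_eq_pow_iff_modEq.mpr (hz ▸ hcd), pow_one]
      right_inv := fun ⟨⟨x, hx⟩, ⟨y, hy⟩⟩ => by
        have hxc : x ^ c = x ^ 1 := pow_eq_pow_iff_modEq.mpr (hx ▸ hcm)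
        have hxd : x ^ d = x ^ 0 := pow_eq_pow_iff_modEq.mpr (hx ▸ hdm)
        have hyc : y ^ c = y ^ 0 := pow_eq_pow_iff_modEq.mpr (hy ▸ hcn)
        have hyd : y ^ d = y ^ 1 := pow_eq_pow_iff_modEq.mpr (hy ▸ hdn)
        simp [mul_pow, hxc, hxd, hyc, hyd] }

/-- The homocyclic group of rank `r` and exponent `m`: the direct product of `r` cyclic groups of
order `m`. -/
abbrev Homocyclic (r m : ℕ) : Type := Fin r → Multiplicative (ZMod m)

theorem card_pow_eq_one_homocyclic (r : ℕ) {m : ℕ} [NeZero m] (d : ℕ) :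
    Nat.card {x : Homocyclic r m // x ^ d = 1} = m.gcd d ^ r := by
  have e : {x : Homocyclic r m // x ^ d = 1} ≃
      (Fin r → (powMonoidHom d : Multiplicative (ZMod m) →* _).ker) :=
    (Equiv.subtypeEquivRight fun x => funext_iff).trans
      (Equiv.subtypePiEquivPi (p := fun _ (a : Multiplicative (ZMod m)) => a ^ d = 1))
  rw [Nat.card_congr e, Nat.card_pi, Finset.prod_const, IsCyclic.card_powMonoidHom_ker]
  simp

theorem orderCount_homocyclic (r : ℕ) {p j k : ℕ} (hp : p.Prime) (hj : j < k) :
    orderCount (Homocyclic r (p ^ k)) (p ^ (j + 1)) = (p ^ r) ^ j * (p ^ r - 1) := by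
  have : NeZero (p ^ k) := ⟨pow_ne_zero k hp.ne_zero⟩
  have h := card_pow_eq_one_add_orderCount (Homocyclic r (p ^ k)) hp j
  rw [card_pow_eq_one_homocyclic, card_pow_eq_one_homocyclic,
    Nat.gcd_eq_right (pow_dvd_pow p hj.le),
    Nat.gcd_eq_right (pow_dvd_pow p (show j + 1 ≤ k from hj))] at h
  rw [Nat.mul_sub_one, ← pow_succ, pow_right_comm p r, pow_right_comm p r]
  omega

theorem orderCount_homocyclic_dvd (r k : ℕ) {p n : ℕ} (hp : p.Prime) (hn : n ≠ 1)
    (h0 : orderCount (Homocyclic r (p ^ k)) n ≠ 0) :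
    orderCount (Homocyclic r (p ^ k)) n ∣
      Nat.card (Homocyclic r (p ^ k)) * (p ^ r - 1) := by
  have : NeZero (p ^ k) := ⟨pow_ne_zero k hp.ne_zero⟩
  obtain ⟨x, rfl⟩ := orderCount_ne_zero_iff.mp h0
  have hx : x ^ p ^ k = 1 := funext fun i => Multiplicative.toAdd.injective (by simp)
  obtain ⟨j, hjk, hj⟩ := (Nat.dvd_prime_pow hp).mp (orderOf_dvd_of_pow_eq_one hx)
  obtain ⟨j, rfl⟩ := Nat.exists_eq_succ_of_ne_zero (n := j) (by rintro rfl; exact hn hj)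
  have hcard : Nat.card (Homocyclic r (p ^ k)) = (p ^ r) ^ k := by
    rw [Nat.card_pi, Finset.prod_const, pow_right_comm]
    simp
  rw [hj, orderCount_homocyclic r hp hjk, hcard]
  exact mul_dvd_mul_right (pow_dvd_pow _ (Nat.le_of_succ_le hjk)) _

theorem dvd_of_mulEquiv_pi_zmod {A : Type*} [CommGroup A] {ι : Type*} {n : ι → ℕ}
    (f : A ≃* ∀ i, Multiplicative (ZMod (n i))) {p : ℕ} (hp : 1 < p)
    (hA : ∀ m : ℕ, (∀ x : A, x ^ m = 1) ∨ ∀ v : A, v ^ p = 1 → ∃ x : A, x ^ m = v)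
    {i : ι} (hi : n i ≠ 0) (hpi : p ∣ n i) (j : ι) : n j ∣ n i := by
  classical
  rcases hA (n i) with htriv | hroot
  · have h := congrArg (fun y => f y j)
      (htriv (f.symm (Pi.mulSingle j (Multiplicative.ofAdd 1))))
    simp only [map_pow, map_one, MulEquiv.apply_symm_apply, Pi.pow_apply, Pi.mulSingle_eq_same,
      Pi.one_apply, ← ofAdd_nsmul, nsmul_one, ofAdd_eq_one] at h
    exact (ZMod.natCast_eq_zero_iff _ _).mp h
  · obtain ⟨q, hq⟩ := hpi
    obtain ⟨x, hx⟩ := hroot (f.symm (Pi.mulSingle i (Multiplicative.ofAdd (q : ZMod (n i))))) (by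
      rw [← map_pow, ← Pi.mulSingle_pow, ← ofAdd_nsmul, nsmul_eq_mul, ← Nat.cast_mul, ← hq]
      simp)
    have h := congrArg (fun y => f y i) hx
    have hfx : f x i ^ n i = 1 := by
      rw [← toAdd_eq_zero]
      simp
    simp only [map_pow, MulEquiv.apply_symm_apply, Pi.pow_apply, Pi.mulSingle_eq_same, hfx] at h
    have hdvd := (ZMod.natCast_eq_zero_iff _ _).mp (ofAdd_eq_one.mp h.symm)
    have hq0 : 0 < q := Nat.pos_of_ne_zero (by rintro rfl; simp [hq] at hi)
    exact absurd (Nat.le_of_dvd hq0 (hq ▸ hdvd)) (by nlinarith)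

theorem exists_mulEquiv_homocyclic {A : Type*} [CommGroup A] [Finite A] [Nontrivial A] {p m : ℕ}
    (hp : p.Prime) (hcard : Nat.card A = p ^ m)
    (hA : ∀ m : ℕ, (∀ x : A, x ^ m = 1) ∨ ∀ v : A, v ^ p = 1 → ∃ x : A, x ^ m = v) :
    ∃ k r, 0 < k ∧ Nonempty (A ≃* Homocyclic r (p ^ k)) := by
  obtain ⟨ι, _, n, hn, ⟨f⟩⟩ := CommGroup.equiv_prod_multiplicative_zmod_of_finite A
  have hpow (i : ι) : ∃ k, 0 < k ∧ n i = p ^ k := by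
    have hdvd : n i ∣ p ^ m := by
      have hprod : Nat.card A = ∏ i, n i := by
        rw [Nat.card_congr f.toEquiv, Nat.card_pi]
        exact Finset.prod_congr rfl fun i _ => Nat.card_zmod (n i)
      exact hcard ▸ hprod ▸ Finset.dvd_prod_of_mem n (Finset.mem_univ i)
    obtain ⟨k, -, hk⟩ := (Nat.dvd_prime_pow hp).mp hdvd
    refine ⟨k, Nat.pos_of_ne_zero ?_, hk⟩
    rintro rfl
    exact (hn i).ne' hk
  have hdvd (i j : ι) : n j ∣ n i := by
    obtain ⟨k, hk, hik⟩ := hpow i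
    exact dvd_of_mulEquiv_pi_zmod f hp.one_lt hA (zero_lt_one.trans (hn i)).ne'
      (hik ▸ dvd_pow_self p hk.ne') j
  obtain ⟨i₀⟩ : Nonempty ι := by
    by_contra hι
    rw [not_nonempty_iff] at hι
    exact not_subsingleton A f.injective.subsingleton
  obtain ⟨k, hk, hik⟩ := hpow i₀
  obtain rfl : n = fun _ => p ^ k := funext fun i => by
    rw [← hik, Nat.dvd_antisymm (hdvd i i₀) (hdvd i₀ i)]
  exact ⟨k, Fintype.card ι, hk,
    ⟨f.trans (MulEquiv.arrowCongr (Fintype.equivFin ι) (MulEquiv.refl _))⟩⟩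

/-- An action `φ : H →* MulAut K` by automorphisms is a *Frobenius action* if every nontrivial
element of `H` fixes only the identity of `K`; this is how a Frobenius complement acts on the
kernel. -/
def IsFrobeniusAction {H K : Type*} [Group H] [Group K] (φ : H →* MulAut K) : Prop :=
  ∀ h : H, h ≠ 1 → MonoidHom.FixedPointFree (φ h)

/-- The subgroup `N` of `H` acts irreducibly on `W` if the only `N`-invariant subgroups of `W` are
`⊥` and `⊤`. The trivial group `W` is not excluded. -/
def ActsIrreducibly {H W : Type*} [Group H] [Group W] (φ : H →* MulAut W) (N : Subgroup H) : Prop :=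
  ∀ E : Subgroup W, (∀ h ∈ N, ∀ w ∈ E, φ h w ∈ E) → E = ⊥ ∨ E = ⊤

namespace IsFrobeniusAction

section Group

variable {H K : Type*} [Group H] [Group K] {φ : H →* MulAut K}

theorem card_dvd_card (hφ : IsFrobeniusAction φ) {P : K → Prop}
    (hP : ∀ h k, P k → P (φ h k)) (hP1 : ¬ P 1) : Nat.card H ∣ Nat.card {k // P k} := by
  let _ : MulAction H {k // P k} :=
    { smul := fun h k => ⟨φ h k, hP h k k.2⟩
      one_smul := fun k => Subtype.ext (by change φ 1 k = k; simp)
      mul_smul := fun g h k => Subtype.ext (by change φ (g * h) k = φ g (φ h k); simp) }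
  have hstab (b : {k // P k}) : MulAction.stabilizer H b = ⊥ := by
    refine (Subgroup.eq_bot_iff_forall _).mpr fun h hh => ?_
    by_contra hne
    exact hP1 (hφ h hne b.1 (congrArg Subtype.val hh) ▸ b.2)
  rw [Nat.card_congr (MulAction.selfEquivOrbitsQuotientProd hstab), Nat.card_prod]
  exact dvd_mul_left _ _

theorem card_dvd_orderCount (hφ : IsFrobeniusAction φ) {n : ℕ} (hn : n ≠ 1) :
    Nat.card H ∣ orderCount K n :=
  hφ.card_dvd_card (P := fun k => orderOf k = n) (fun h k hk => by simpa using hk)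
    (by simpa using hn.symm)

theorem card_dvd_card_sub_one [Finite K] (hφ : IsFrobeniusAction φ) {W : Subgroup K}
    (hW : ∀ h, ∀ w ∈ W, φ h w ∈ W) : Nat.card H ∣ Nat.card W - 1 := by
  have hcard : Nat.card {k : K // k ∈ W ∧ k ≠ 1} = Nat.card W - 1 :=
    Set.ncard_sdiff_singleton_of_mem (s := (W : Set K)) W.one_mem
  exact hcard ▸ hφ.card_dvd_card (P := fun k => k ∈ W ∧ k ≠ 1)
    (fun h k hk => ⟨hW h k hk.1, by simpa using hk.2⟩) (by simp)

theorem coprime_card [Finite K] (hφ : IsFrobeniusAction φ) :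
    (Nat.card H).Coprime (Nat.card K) := by
  have h := hφ.card_dvd_card_sub_one (W := ⊤) (by simp)
  rw [Subgroup.card_top] at h
  refine Nat.Coprime.coprime_dvd_left h ?_
  simpa using Nat.coprime_self_sub_left (m := 1) (n := Nat.card K) Nat.card_pos

theorem injective [Nontrivial K] (hφ : IsFrobeniusAction φ) : Function.Injective φ := by
  refine (injective_iff_map_eq_one φ).mpr fun h hh => ?_
  obtain ⟨k, hk⟩ := exists_ne (1 : K)
  by_contra hne
  exact hk (hφ h hne k (by rw [hh, MulAut.one_apply]))

theorem involutive {t : H} (ht : orderOf t = 2) : Function.Involutive (φ t) := fun k => by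
  rw [← MulAut.mul_apply, ← map_mul, ← sq, ← ht, pow_orderOf_eq_one, map_one, MulAut.one_apply]

theorem fixedPointFree_of_orderOf_eq_two (hφ : IsFrobeniusAction φ) {t : H} (ht : orderOf t = 2) :
    MonoidHom.FixedPointFree (φ t) :=
  hφ t (by rintro rfl; simp at ht)

theorem mul_comm_of_two_dvd_card [Finite H] [Finite K] (hφ : IsFrobeniusAction φ)
    (h2 : 2 ∣ Nat.card H) (x y : K) : x * y = y * x := by
  obtain ⟨t, ht⟩ := exists_prime_orderOf_dvd_card' 2 h2
  exact (hφ.fixedPointFree_of_orderOf_eq_two ht).commute_all_of_involutive (involutive ht) x y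

-- An involution without nontrivial fixed points must invert every element.
theorem subsingleton_orderOf_eq_two [Finite K] [Nontrivial K] (hφ : IsFrobeniusAction φ) :
    {t : H | orderOf t = 2}.Subsingleton := fun s hs t ht => by
  refine hφ.injective (MulEquiv.ext fun k => ?_)
  rw [(hφ.fixedPointFree_of_orderOf_eq_two hs).coe_eq_inv_of_involutive (involutive hs),
    (hφ.fixedPointFree_of_orderOf_eq_two ht).coe_eq_inv_of_involutive (involutive ht)]

theorem comp_subtype (hφ : IsFrobeniusAction φ) (C : Subgroup H) :
    IsFrobeniusAction (φ.comp C.subtype) := fun c hc =>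
  hφ c (by simpa using hc)

theorem characteristic_comp (hφ : IsFrobeniusAction φ) (W : Subgroup K) [W.Characteristic] :
    IsFrobeniusAction ((MulAut.characteristic W).comp φ) := fun h hh w hw =>
  Subtype.ext (hφ h hh w (congrArg Subtype.val hw))

theorem mul_comm_of_isCyclic [Nontrivial K] [IsCyclic K] (hφ : IsFrobeniusAction φ) (g h : H) :
    g * h = h * g := by
  refine hφ.injective ((IsCyclic.mulAutMulEquiv K).injective ?_)
  rw [map_mul, map_mul, map_mul, map_mul, mul_comm]

theorem actsIrreducibly [Finite K] (hφ : IsFrobeniusAction φ) {p r : ℕ} (hp : p.Prime)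
    (hK : Nat.card K = p ^ r) {N : Subgroup H}
    (hN : ∀ k, 0 < k → k < r → ¬ Nat.card N ∣ p ^ k - 1) : ActsIrreducibly φ N := by
  intro E hE
  obtain ⟨k, hkr, hk⟩ := (Nat.dvd_prime_pow hp).mp (hK ▸ E.card_subgroup_dvd_card)
  have hdvd := (hφ.comp_subtype N).card_dvd_card_sub_one fun h x hx => hE h h.2 x hx
  rcases Nat.eq_zero_or_pos k with rfl | hk0
  · exact Or.inl (E.card_eq_one.mp hk)
  · obtain rfl : k = r := hkr.antisymm <| by
      by_contra! hlt
      exact hN k hk0 hlt (hk ▸ hdvd)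
    exact Or.inr (E.card_eq_iff_eq_top.mp (hk.trans hK.symm))

end Group

section CommGroup

variable {H A : Type*} [Group H] [CommGroup A] [Finite A] {φ : H →* MulAut A}

theorem eq_of_prime_dvd_card (hφ : IsFrobeniusAction φ) (hH : 1 < Nat.card H)
    (hA : ∀ n, n ≠ 1 → orderCount A n ≠ 0 → orderCount A n ∣ Nat.card A * Nat.card H)
    {p q : ℕ} (hp : p.Prime) (hq : q.Prime) (hpA : p ∣ Nat.card A) (hqA : q ∣ Nat.card A) :
    p = q := by
  by_contra hpq
  have : Fact p.Prime := ⟨hp⟩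
  have : Fact q.Prime := ⟨hq⟩
  have hcount := orderCount_mul_of_coprime (A := A) ((Nat.coprime_primes hp hq).mpr hpq)
    hp.ne_zero hq.ne_zero
  have hdvd : orderCount A (p * q) ∣ Nat.card A * Nat.card H := by
    refine hA _ (fun h => hp.one_lt.ne' (Nat.eq_one_of_mul_eq_one_right h)) ?_
    rw [hcount]
    exact mul_ne_zero (orderCount_ne_zero_iff.mpr (exists_prime_orderOf_dvd_card' p hpA))
      (orderCount_ne_zero_iff.mpr (exists_prime_orderOf_dvd_card' q hqA))
  have hsq : Nat.card H * Nat.card H ∣ Nat.card A * Nat.card H :=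
    (mul_dvd_mul (hφ.card_dvd_orderCount hp.ne_one) (hφ.card_dvd_orderCount hq.ne_one)).trans
      (hcount ▸ hdvd)
  exact hH.ne' (hφ.coprime_card.eq_one_of_dvd
    (Nat.dvd_of_mul_dvd_mul_right (zero_lt_one.trans hH) hsq))

theorem mem_of_pow_eq_one (hφ : IsFrobeniusAction φ) {p m : ℕ} (hp : p.Prime)
    (hm : Nat.card A = p ^ m) (hH : Nat.card {x : A // x ^ p = 1} ≤ Nat.card H + 1)
    {E : Subgroup A} (hE : ∀ h, ∀ x ∈ E, φ h x ∈ E) (hE1 : E ≠ ⊥) {x : A} (hx : x ^ p = 1) :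
    x ∈ E := by
  have : Fact p.Prime := ⟨hp⟩
  let Ω : Subgroup A := (powMonoidHom p).ker
  have hEΩ : E ⊓ Ω ≠ ⊥ := by
    have hpE : p ∣ Nat.card E := by
      obtain ⟨j, -, hj⟩ := (Nat.dvd_prime_pow hp).mp (hm ▸ E.card_subgroup_dvd_card)
      exact hj ▸ dvd_pow_self p (by rintro rfl; exact hE1 (E.card_eq_one.mp hj))
    obtain ⟨y, hy⟩ := exists_prime_orderOf_dvd_card' p hpE
    intro hbot
    have hyΩ : (y : A) ∈ E ⊓ Ω := by
      refine ⟨y.2, ?_⟩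
      change (y : A) ^ p = 1
      rw [← hy, ← E.orderOf_coe, pow_orderOf_eq_one]
    rw [hbot, Subgroup.mem_bot, ← orderOf_eq_one_iff, E.orderOf_coe, hy] at hyΩ
    exact hp.ne_one hyΩ
  have hdvd : Nat.card H ∣ Nat.card (E ⊓ Ω : Subgroup A) - 1 :=
    hφ.card_dvd_card_sub_one fun h x hx =>
      ⟨hE h x hx.1, by simpa [Ω, MonoidHom.mem_ker, ← map_pow] using hx.2⟩
  have hlt := (Subgroup.one_lt_card_iff_ne_bot _).mpr hEΩ
  have hle : Nat.card Ω ≤ Nat.card (E ⊓ Ω : Subgroup A) := by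
    have := Nat.le_of_dvd (by omega) hdvd
    exact hH.trans (by omega)
  exact inf_eq_right.mp (Subgroup.eq_of_le_of_card_ge inf_le_right hle) hx

theorem orderCount_eq_card (hφ : IsFrobeniusAction φ) {p m : ℕ} (hp : p.Prime)
    (hm : Nat.card A = p ^ m) (h0 : orderCount A p ≠ 0)
    (hdvd : orderCount A p ∣ Nat.card A * Nat.card H) : orderCount A p = Nat.card H := by
  have hcard : Nat.card (powMonoidHom p : A →* A).ker = 1 + orderCount A p := by
    simpa using (card_pow_eq_one_add_orderCount A hp 0).symm
  have hp1 : p ∣ 1 + orderCount A p := by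
    have : 1 + orderCount A p ∣ p ^ m := hm ▸ hcard ▸ Subgroup.card_subgroup_dvd_card _
    obtain ⟨j, -, hj⟩ := (Nat.dvd_prime_pow hp).mp this
    exact hj ▸ dvd_pow_self p (by rintro rfl; exact h0 (by simpa using hj))
  have hcop : (orderCount A p).Coprime (Nat.card A) := by
    rw [hm]
    refine ((hp.coprime_iff_not_dvd.mpr fun h => ?_).symm).pow_right m
    exact hp.ne_one (Nat.dvd_one.mp ((Nat.dvd_add_left h).mp hp1))
  exact Nat.dvd_antisymm (hcop.dvd_of_dvd_mul_left hdvd) (hφ.card_dvd_orderCount hp.ne_one)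

theorem exists_homocyclic_of_orderCount_dvd [Nontrivial A] (hφ : IsFrobeniusAction φ)
    (hH : 1 < Nat.card H)
    (hA : ∀ n, n ≠ 1 → orderCount A n ≠ 0 → orderCount A n ∣ Nat.card A * Nat.card H) :
    ∃ p k r, p.Prime ∧ 0 < k ∧ Nat.card H + 1 = p ^ r ∧
      Nonempty (A ≃* Homocyclic r (p ^ k)) := by
  obtain ⟨p, hp, hpA⟩ := Nat.exists_prime_and_dvd (Finite.one_lt_card (α := A)).ne'
  have : Fact p.Prime := ⟨hp⟩
  have hm := Nat.eq_prime_pow_of_unique_prime_dvd Nat.card_pos.ne'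
    fun {q} hq hqA => hφ.eq_of_prime_dvd_card hH hA hq hp hqA hpA
  have h0 : orderCount A p ≠ 0 :=
    orderCount_ne_zero_iff.mpr (exists_prime_orderOf_dvd_card' p hpA)
  have hcount := hφ.orderCount_eq_card hp hm h0 (hA p hp.ne_one h0)
  have hΩ : Nat.card {x : A // x ^ p = 1} = 1 + orderCount A p := by
    simpa using (card_pow_eq_one_add_orderCount A hp 0).symm
  obtain ⟨k, r, hk, ⟨f⟩⟩ := exists_mulEquiv_homocyclic hp hm fun n => by
    let E : Subgroup A := (powMonoidHom n).range
    by_cases hE : E = ⊥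
    · exact Or.inl fun x => (Subgroup.eq_bot_iff_forall E).mp hE _ ⟨x, rfl⟩
    · refine Or.inr fun v hv => hφ.mem_of_pow_eq_one hp hm (by omega) (E := E) ?_ hE hv
      rintro h _ ⟨x, rfl⟩
      exact ⟨φ h x, by simp⟩
  refine ⟨p, k, r, hp, hk, ?_, ⟨f⟩⟩
  have hr := orderCount_homocyclic r hp hk
  rw [← orderCount_congr f, zero_add, pow_one, hcount, pow_zero, one_mul] at hr
  have := Nat.one_le_pow r p hp.pos
  omega

end CommGroup

end IsFrobeniusAction

theorem exists_ringHom_eq_pow {F : Type*} [Field F] [Finite F] (p : ℕ) [Fact p.Prime] [CharP F p]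
    (σ : F →+* F) : ∃ i : ℕ, ∀ x, σ x = x ^ p ^ i := by
  let _ := ZMod.algebra F p
  let σ' : F →ₐ[ZMod p] F :=
    { σ with commutes' := fun z => RingHom.congr_fun (Subsingleton.elim
        (σ.comp (algebraMap (ZMod p) F)) (algebraMap (ZMod p) F)) z }
  obtain ⟨i, hi⟩ := (FiniteField.bijective_frobeniusAlgHom_pow (ZMod p) F).surjective σ'
  refine ⟨i, fun x => ?_⟩
  have hx : (FiniteField.frobeniusAlgHom (ZMod p) F ^ i.1) x = σ x := DFunLike.congr_fun hi x
  rw [← hx, AlgHom.coe_pow, FiniteField.coe_frobeniusAlgHom, ZMod.card, pow_iterate]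

section Linearization

variable {H W : Type*} [Group H] [CommGroup W]

/-- An action of `H` on a commutative group `W` by automorphisms, as a multiplicative homomorphism
into the endomorphism ring of `W` written additively. -/
def linearization (φ : H →* MulAut W) : H →* AddMonoid.End (Additive W) :=
  (MulEquiv.Monoid.End.toMonoidHom.comp (MulDistribMulAction.toMonoidEnd (MulAut W) W)).comp φ

/-- The ring of endomorphisms of `W` commuting with the action of the subgroup `N` of `H`. -/
def commutant (φ : H →* MulAut W) (N : Subgroup H) : Subring (AddMonoid.End (Additive W)) :=
  Subring.centralizer (linearization φ '' N)

variable {φ : H →* MulAut W} {N : Subgroup H}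

theorem linearization_injective (hφ : Function.Injective φ) :
    Function.Injective (linearization φ) := fun _ _ hgh =>
  hφ (MulEquiv.ext fun w => congrArg Additive.toMul (DFunLike.congr_fun hgh (Additive.ofMul w)))

theorem mem_commutant {x : AddMonoid.End (Additive W)} :
    x ∈ commutant φ N ↔ ∀ h ∈ N, linearization φ h * x = x * linearization φ h := by
  simp [commutant, Subring.mem_centralizer_iff]

theorem linearization_mem_commutant {c : H} (hc : c ∈ Subgroup.centralizer (N : Set H)) :
    linearization φ c ∈ commutant φ N :=
  mem_commutant.mpr fun h hh => by
    rw [← map_mul, ← map_mul, Subgroup.mem_centralizer_iff.mp hc h hh]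

theorem conj_mem_commutant [N.Normal] {x : AddMonoid.End (Additive W)} (hx : x ∈ commutant φ N)
    (b : H) : linearization φ b * x * linearization φ b⁻¹ ∈ commutant φ N :=
  mem_commutant.mpr fun h hh => by
    have hconj := mem_commutant.mp hx (b⁻¹ * h * b) (‹N.Normal›.conj_mem' h hh b)
    calc linearization φ h * (linearization φ b * x * linearization φ b⁻¹)
      _ = linearization φ b * (linearization φ (b⁻¹ * h * b) * x) * linearization φ b⁻¹ := by
        simp only [← mul_assoc, ← map_mul]
        group
      _ = linearization φ b * x * linearization φ b⁻¹ * linearization φ h := by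
        rw [hconj]
        simp only [mul_assoc, ← map_mul]
        group

/-- Conjugation by `b`, as an endomorphism of the commutant of a normal subgroup. -/
def commutantConj (φ : H →* MulAut W) (N : Subgroup H) [N.Normal] (b : H) :
    commutant φ N →+* commutant φ N where
  toFun x := ⟨linearization φ b * x * linearization φ b⁻¹, conj_mem_commutant x.2 b⟩
  map_one' := Subtype.ext (by simp [← map_mul])
  map_mul' x y := Subtype.ext (by
    have h : linearization φ b⁻¹ * linearization φ b = 1 := by simp [← map_mul]
    simp [mul_assoc, ← mul_assoc (linearization φ b⁻¹) (linearization φ b), h])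
  map_zero' := Subtype.ext (by simp)
  map_add' x y := Subtype.ext (by simp [mul_add, add_mul])

-- Schur's lemma: the kernel of `x` is an `N`-invariant proper subgroup.
theorem commutant_injective (hirr : ActsIrreducibly φ N)
    {x : AddMonoid.End (Additive W)} (hx : x ∈ commutant φ N) (hx0 : x ≠ 0) :
    Function.Injective x := by
  let E : Subgroup W := AddSubgroup.toSubgroup' (AddMonoidHom.ker x)
  have hmem {w : W} : w ∈ E ↔ x (Additive.ofMul w) = 0 := Iff.rfl
  have hE : ∀ h ∈ N, ∀ w ∈ E, φ h w ∈ E := fun h hh w hw => by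
    have hcomm : linearization φ h (x (Additive.ofMul w)) = x (Additive.ofMul (φ h w)) :=
      DFunLike.congr_fun (mem_commutant.mp hx h hh) (Additive.ofMul w)
    rw [hmem, ← hcomm, hmem.mp hw, map_zero]
  rcases hirr E hE with hbot | htop
  · refine (injective_iff_map_eq_zero x).mpr fun w hw => ?_
    exact congrArg Additive.ofMul ((Subgroup.eq_bot_iff_forall E).mp hbot w.toMul hw)
  · exact absurd (AddMonoidHom.ext fun w => hmem.mp (htop ▸ Subgroup.mem_top w.toMul)) hx0

theorem isDomain_commutant [Nontrivial W]
    (hirr : ActsIrreducibly φ N) :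
    IsDomain (commutant φ N) := by
  have : Nontrivial (commutant φ N) := by
    obtain ⟨w, hw⟩ := exists_ne (1 : W)
    refine ⟨1, 0, fun h => hw ?_⟩
    exact congrArg Additive.toMul (DFunLike.congr_fun (congrArg Subtype.val h) (Additive.ofMul w))
  have : NoZeroDivisors (commutant φ N) := ⟨fun {x y} hxy => or_iff_not_imp_left.mpr fun hx => by
    refine Subtype.ext (AddMonoidHom.ext fun w => ?_)
    refine commutant_injective hirr x.2 (by simpa using hx) ?_
    exact (DFunLike.congr_fun (congrArg Subtype.val hxy) w).trans (map_zero x.1).symm⟩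
  exact NoZeroDivisors.to_isDomain _

theorem isCyclic_centralizer [Finite H] [Finite W] [Nontrivial W] (hφ : Function.Injective φ)
    (hirr : ActsIrreducibly φ N) :
    IsCyclic (Subgroup.centralizer (N : Set H)) := by
  have : Finite (AddMonoid.End (Additive W)) := DFunLike.finite _
  have := isDomain_commutant hirr
  let _ := (Finite.isDomain_to_isField (commutant φ N)).toField
  let f : Subgroup.centralizer (N : Set H) →* commutant φ N :=
    { toFun := fun c => ⟨linearization φ c, linearization_mem_commutant c.2⟩
      map_one' := Subtype.ext (map_one (linearization φ))
      map_mul' := fun c d => Subtype.ext (map_mul (linearization φ) (c : H) d) }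
  exact isCyclic_of_injective_ringHom f fun c d hcd =>
    Subtype.ext (linearization_injective hφ (congrArg Subtype.val hcd))

theorem exists_conj_eq_pow_of_mem_centralizer [Finite W] [Nontrivial W] [N.Normal]
    (hφ : Function.Injective φ)
    (hirr : ActsIrreducibly φ N)
    {p : ℕ} (hp : p.Prime) (hW : ∀ w : W, w ^ p = 1) (b : H) :
    ∃ i : ℕ, ∀ c ∈ Subgroup.centralizer (N : Set H), b * c * b⁻¹ = c ^ p ^ i := by
  have : Fact p.Prime := ⟨hp⟩
  have : Finite (AddMonoid.End (Additive W)) := DFunLike.finite _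
  have := isDomain_commutant hirr
  let _ := (Finite.isDomain_to_isField (commutant φ N)).toField
  have : CharP (commutant φ N) p := (CharP.charP_iff_prime_eq_zero hp).mpr <|
    Subtype.ext <| AddMonoidHom.ext fun w => by
      have hpw : p • w = 0 := congrArg Additive.ofMul (hW w.toMul)
      exact (AddMonoid.End.natCast_apply p w).trans hpw
  obtain ⟨i, hi⟩ := exists_ringHom_eq_pow p (commutantConj φ N b)
  refine ⟨i, fun c hc => linearization_injective hφ ?_⟩
  rw [map_mul, map_mul, map_pow]
  exact congrArg Subtype.val (hi ⟨linearization φ c, linearization_mem_commutant hc⟩)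

end Linearization

section UniqueInvolution

variable {H : Type*} [Group H]

theorem mem_center_of_orderOf_eq_two (hinv : {t : H | orderOf t = 2}.Subsingleton) {z : H}
    (hz : orderOf z = 2) : z ∈ Subgroup.center H :=
  Subgroup.mem_center_iff.mpr fun x => by
    have hconj : x * z * x⁻¹ = z := hinv (by
      rw [Set.mem_ofPred_eq, ← MulAut.conj_apply, MulEquiv.orderOf_eq, hz]) hz
    exact mul_inv_eq_iff_eq_mul.mp hconj

theorem card_sylow_five_eq_one (hH : Nat.card H = 80)
    (hinv : {t : H | orderOf t = 2}.Subsingleton) : Nat.card (Sylow 5 H) = 1 := by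
  have : Finite H := Nat.finite_of_card_ne_zero (by omega)
  have : Fact (Nat.Prime 5) := ⟨Nat.prime_five⟩
  let P : Sylow 5 H := default
  let M := Subgroup.normalizer (P : Set H)
  obtain ⟨z, hz⟩ := exists_prime_orderOf_dvd_card' (G := H) 2 (by omega)
  have h2 : 2 ∣ Nat.card M := hz ▸ Subgroup.orderOf_dvd_natCard M
    (Subgroup.center_le_normalizer _ (mem_center_of_orderOf_eq_two hinv hz))
  have h5 : 5 ∣ Nat.card M := (P.dvd_card_of_dvd_card (by omega)).trans
    (Subgroup.card_dvd_of_le Subgroup.le_normalizer)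
  have hindex : Nat.card M * Nat.card (Sylow 5 H) = 80 := by
    rw [P.card_eq_index_normalizer, Subgroup.card_mul_index, hH]
  have hmod : Nat.card (Sylow 5 H) % 5 = 1 := card_sylow_modEq_one 5 H
  obtain ⟨c, hc⟩ : 10 ∣ Nat.card M := (by norm_num : Nat.Coprime 2 5).mul_dvd_of_dvd_of_dvd h2 h5
  have h8 : Nat.card (Sylow 5 H) ∣ 8 := ⟨c, by rw [hc] at hindex; linarith⟩
  have hle := Nat.le_of_dvd (by norm_num) h8
  interval_cases Nat.card (Sylow 5 H) <;> omega

theorem exists_normal_zpowers_of_orderOf_eq_five (hH : Nat.card H = 80)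
    (hinv : {t : H | orderOf t = 2}.Subsingleton) :
    ∃ a : H, orderOf a = 5 ∧ (Subgroup.zpowers a).Normal := by
  have : Finite H := Nat.finite_of_card_ne_zero (by omega)
  have : Fact (Nat.Prime 5) := ⟨Nat.prime_five⟩
  have : Subsingleton (Sylow 5 H) :=
    (Nat.card_eq_one_iff_unique.mp (card_sylow_five_eq_one hH hinv)).1
  obtain ⟨a, ha⟩ := exists_prime_orderOf_dvd_card' (G := H) 5 (by omega)
  have hcard : Nat.card (Subgroup.zpowers a) = 5 ^ (Nat.card H).factorization 5 := by
    rw [Nat.card_zpowers, ha, hH, Nat.factorization_def _ Nat.prime_five,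
      show 80 = 5 ^ 1 * 2 ^ 4 from rfl, padicValNat_mul_pow_left _ _ (by norm_num), pow_one]
  exact ⟨a, ha, (Sylow.ofCard (Subgroup.zpowers a) hcard).normal_of_subsingleton⟩

theorem mem_of_sq_eq_sq (hinv : {t : H | orderOf t = 2}.Subsingleton) {C : Subgroup H} {x y z : H}
    (hzC : z ∈ C) (hz : orderOf z = 2) (hxy : Commute x y) (hsq : x ^ 2 = y ^ 2) (hy : y ∈ C) :
    x ∈ C := by
  have hquot : (x * y⁻¹) ^ 2 = 1 := by
    rw [hxy.inv_right.mul_pow, hsq, inv_pow, mul_inv_cancel]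
  rw [← inv_mul_cancel_right x y]
  refine C.mul_mem ?_ hy
  by_cases h1 : x * y⁻¹ = 1
  · exact h1 ▸ C.one_mem
  · exact hinv (orderOf_eq_prime hquot h1) hz ▸ hzC

end UniqueInvolution

theorem index_centralizer_dvd_totient {H : Type*} [Group H] (N : Subgroup H) [N.Normal]
    [IsCyclic N] [Finite N] :
    (Subgroup.centralizer (N : Set H)).index ∣ Nat.totient (Nat.card N) := by
  have hker : (MulAut.conjNormal (H := N)).ker = Subgroup.centralizer (N : Set H) := by
    ext x
    simp [MonoidHom.mem_ker, MulEquiv.ext_iff, Subtype.ext_iff, MulAut.conjNormal_apply,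
      Subgroup.mem_centralizer_iff, mul_inv_eq_iff_eq_mul, eq_comm (a := x * _)]
  rw [← hker, Subgroup.index_ker, ← IsCyclic.card_mulAut]
  exact Subgroup.card_subgroup_dvd_card _

theorem conj_pow_eq_pow_pow {H : Type*} [Group H] {C : Subgroup H} {b : H} {m : ℕ}
    (h : ∀ c ∈ C, b * c * b⁻¹ = c ^ m) (n : ℕ) {c : H} (hc : c ∈ C) :
    b ^ n * c * (b ^ n)⁻¹ = c ^ m ^ n := by
  induction n with
  | zero => simp
  | succ n ih =>
    calc b ^ (n + 1) * c * (b ^ (n + 1))⁻¹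
      _ = b * (b ^ n * c * (b ^ n)⁻¹) * b⁻¹ := by group
      _ = c ^ m ^ (n + 1) := by rw [ih, h _ (C.pow_mem hc _), ← pow_mul, pow_succ]

section CentralizerOrderFive

open Subgroup

variable {H : Type*} [Group H] {a b c : H}

theorem centralizer_zpowers (a : H) : centralizer (zpowers a : Set H) = centralizer {a} := by
  rw [zpowers_eq_closure, centralizer_closure]

theorem self_mem_centralizer (a : H) : a ∈ centralizer {a} :=
  mem_centralizer_singleton_iff.mpr rfl

theorem mem_centralizer_iff_modEq_one {n m : ℕ} (hb : b * a * b⁻¹ = a ^ m) (ha : orderOf a = n) :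
    b ∈ centralizer {a} ↔ m ≡ 1 [MOD n] := by
  rw [mem_centralizer_singleton_iff, ← mul_inv_eq_iff_eq_mul, hb, ← ha, ← pow_eq_pow_iff_modEq,
    pow_one]

theorem exists_conj_ne_pow (hH : Nat.card H = 80) (hinv : {t : H | orderOf t = 2}.Subsingleton)
    (ha : orderOf a = 5) (hc : orderOf c = 4) (hcC : c ∈ centralizer {a}) {m : ℕ}
    (hm : m = 3 ∨ m = 27) : ∃ x ∈ centralizer {a}, b * x * b⁻¹ ≠ x ^ m := by
  by_contra! hb
  have hpow (n : ℕ) : b ^ n ∈ centralizer {a} ↔ m ^ n ≡ 1 [MOD 5] :=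
    mem_centralizer_iff_modEq_one (conj_pow_eq_pow_pow hb n (self_mem_centralizer a)) ha
  have h4 : b ^ 4 ∈ centralizer {a} := (hpow 4).mpr (by rcases hm with rfl | rfl <;> decide)
  have h2 : b ^ 2 ∉ centralizer {a} := (hpow 2).not.mpr (by rcases hm with rfl | rfl <;> decide)
  have hfix : (b ^ 4) ^ m = b ^ 4 :=
    (hb _ h4).symm.trans (mul_inv_eq_of_eq_mul (Commute.self_pow b 4))
  have hsq : (b ^ 4) ^ 2 = 1 := by
    have hcard : (b ^ 4) ^ 20 = 1 := by
      rw [← pow_mul, show 4 * 20 = 80 from rfl, ← hH, pow_card_eq_one']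
    have hfix' : (b ^ 4) ^ (m - 1) = 1 := by
      rwa [← pow_sub_one_mul (by omega), mul_eq_right] at hfix
    rcases hm with rfl | rfl
    · exact hfix'
    · exact pow_gcd_eq_one.mpr ⟨hfix', hcard⟩
  have hcomm : Commute (b ^ 2) c := by
    have hbc := conj_pow_eq_pow_pow hb 2 hcC
    have hc1 : c ^ m ^ 2 = c := by
      rw [← pow_mod_orderOf, hc]
      rcases hm with rfl | rfl <;> simp
    exact mul_inv_eq_iff_eq_mul.mp (hbc.trans hc1)
  have hc2 : orderOf (c ^ 2) = 2 := by rw [orderOf_pow' c two_ne_zero, hc]; rfl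
  refine h2 ?_
  by_cases h1 : b ^ 4 = 1
  · exact mem_of_sq_eq_sq hinv (pow_mem hcC 2) hc2 (.one_right _)
      (by rw [← pow_mul, h1, one_pow]) (one_mem _)
  · exact mem_of_sq_eq_sq hinv (pow_mem hcC 2) hc2 hcomm
      ((pow_mul b 2 2).symm.trans (hinv (orderOf_eq_prime hsq h1) hc2)) hcC

theorem conj_eq_pow_nine (hH : Nat.card H = 80) (hinv : {t : H | orderOf t = 2}.Subsingleton)
    (ha : orderOf a = 5) (hc : orderOf c = 4) (hcC : c ∈ centralizer {a})
    (hb : ∃ i : ℕ, ∀ x ∈ centralizer {a}, b * x * b⁻¹ = x ^ 3 ^ i) (hbC : b ∉ centralizer {a}) :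
    ∀ x ∈ centralizer {a}, b * x * b⁻¹ = x ^ 9 := by
  obtain ⟨i, hi⟩ := hb
  have hmod : ∀ x ∈ centralizer {a}, b * x * b⁻¹ = x ^ 3 ^ (i % 4) := fun x hx => by
    rw [hi x hx, pow_eq_pow_iff_modEq]
    refine Nat.ModEq.of_dvd (hH ▸ orderOf_dvd_natCard x) ?_
    conv_lhs => rw [← Nat.div_add_mod i 4, pow_add, pow_mul]
    simpa using ((show 3 ^ 4 ≡ 1 [MOD 80] from rfl).pow (i / 4)).mul_right (3 ^ (i % 4))
  have hlt : i % 4 < 4 := Nat.mod_lt _ (by norm_num)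
  interval_cases i % 4
  · exact absurd ((mem_centralizer_iff_modEq_one (hmod a (self_mem_centralizer a)) ha).mpr rfl) hbC
  · obtain ⟨x, hx, hne⟩ := exists_conj_ne_pow (b := b) hH hinv ha hc hcC (Or.inl rfl)
    exact absurd (hmod x hx) hne
  · exact hmod
  · obtain ⟨x, hx, hne⟩ := exists_conj_ne_pow (b := b) hH hinv ha hc hcC (Or.inr rfl)
    exact absurd (hmod x hx) hne

theorem index_centralizer_eq_two (ha : orderOf a = 5) (hbC : b ∉ centralizer {a})
    (h9 : ∀ b ∉ centralizer {a}, ∀ x ∈ centralizer {a}, b * x * b⁻¹ = x ^ 9) :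
    (centralizer {a}).index = 2 := by
  refine index_eq_two_iff.mpr ⟨b, fun x => ?_⟩
  by_cases hx : x ∈ centralizer {a}
  · exact Or.inr ⟨hx, fun h => hbC ((Subgroup.mul_mem_cancel_left _ hx).mp h)⟩
  · refine Or.inl ⟨(mem_centralizer_iff_modEq_one (m := 9 * 9) ?_ ha).mpr (by decide), hx⟩
    have haC := self_mem_centralizer a
    change x * b * a * (x * b)⁻¹ = a ^ (9 * 9)
    calc x * b * a * (x * b)⁻¹
      _ = x * (b * a * b⁻¹) * x⁻¹ := by group
      _ = a ^ (9 * 9) := by rw [h9 b hbC a haC, h9 x hx _ (pow_mem haC 9), pow_mul]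

theorem pow_eight_ne_one (hinv : {t : H | orderOf t = 2}.Subsingleton) {C : Subgroup H}
    [IsCyclic C] {m : ℕ} (hm : m ≠ 0) (hC : Nat.card C = 8 * m) {d : H} (hd : d ∉ C)
    (hd2 : d ^ 2 ∈ C) (hcomm : ∀ x ∈ C, x ^ 8 = 1 → Commute d x) : d ^ 8 ≠ 1 := fun hd8 => by
  have : Finite C := Nat.finite_of_card_ne_zero (by omega)
  obtain ⟨g, hg⟩ := IsCyclic.exists_monoid_generator (α := C)
  have hgm : orderOf (g : H) = 8 * m := by
    rw [orderOf_coe, ← hC, orderOf_eq_card_of_forall_mem_powers hg]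
  obtain ⟨k, hk⟩ := hg ⟨d ^ 2, hd2⟩
  have hgk : (g : H) ^ k = d ^ 2 := congrArg Subtype.val hk
  have hdvd : 8 * m ∣ k * 4 := by
    rw [← hgm, orderOf_dvd_iff_pow_eq_one, pow_mul, hgk, ← pow_mul, hd8]
  obtain ⟨l, rfl⟩ : 2 * m ∣ k := by
    rwa [show 8 * m = 2 * m * 4 by ring, Nat.mul_dvd_mul_iff_right (by norm_num)] at hdvd
  have hz : orderOf ((g : H) ^ (4 * m)) = 2 := by
    have h2m : 8 * m = 2 * (4 * m) := by ring
    rw [orderOf_pow_of_dvd (by omega) (by rw [hgm, h2m]; exact dvd_mul_left _ _), hgm, h2m,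
      Nat.mul_div_cancel _ (by omega)]
  have hy : (g : H) ^ (m * l) ∈ C := pow_mem g.2 _
  refine hd (mem_of_sq_eq_sq hinv (pow_mem g.2 _) hz (hcomm _ hy ?_) ?_ hy)
  · rw [← pow_mul, show m * l * 8 = 8 * m * l by ring, pow_mul, ← hgm, pow_orderOf_eq_one, one_pow]
  · rw [← hgk, ← pow_mul, show 2 * m * l = m * l * 2 by ring]

end CentralizerOrderFive

section CardEighty

variable {H A : Type*} [Group H] [CommGroup A] {φ : H →* MulAut A}

theorem IsFrobeniusAction.actsIrreducibly_zpowers (hφ : IsFrobeniusAction φ)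
    (hA : Nat.card A = 81) {a : H} (ha : orderOf a = 5) :
    ActsIrreducibly φ (Subgroup.zpowers a) := by
  have : Finite A := Nat.finite_of_card_ne_zero (by omega)
  refine hφ.actsIrreducibly Nat.prime_three (r := 4) hA fun k hk0 hk4 => ?_
  rw [Nat.card_zpowers, ha]
  interval_cases k <;> norm_num

theorem exists_orderOf_eq_four_centralizer (hH : Nat.card H = 80) {a : H} (ha : orderOf a = 5)
    [(Subgroup.zpowers a).Normal] [IsCyclic (Subgroup.centralizer {a})] :
    ∃ c : Subgroup.centralizer {a}, orderOf c = 4 := by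
  have : Finite H := Nat.finite_of_card_ne_zero (by omega)
  have hindex : (Subgroup.centralizer {a}).index ∣ 4 := by
    have hdvd := index_centralizer_dvd_totient (Subgroup.zpowers a)
    rwa [centralizer_zpowers, Nat.card_zpowers, ha, Nat.totient_prime Nat.prime_five] at hdvd
  obtain ⟨g, hg⟩ := IsCyclic.exists_ofOrder_eq_natCard (α := Subgroup.centralizer {a})
  obtain ⟨l, hl⟩ : 4 ∣ Nat.card (Subgroup.centralizer {a}) := by
    have hmul := (Subgroup.centralizer {a}).card_mul_index
    have hle := Nat.le_of_dvd (by norm_num) hindex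
    interval_cases (Subgroup.centralizer {a}).index <;> omega
  have hl0 : l ≠ 0 := by rintro rfl; exact Nat.card_pos.ne' hl
  refine ⟨g ^ l, ?_⟩
  rw [orderOf_pow_of_dvd hl0 (hg.trans hl ▸ dvd_mul_left l 4), hg, hl,
    Nat.mul_div_cancel _ (Nat.pos_of_ne_zero hl0)]

theorem exists_orderOf_eq_sixteen (hH : Nat.card H = 80)
    (hnc : ¬ ∀ x y : H, x * y = y * x) (hinv : {t : H | orderOf t = 2}.Subsingleton) {a : H}
    (ha : orderOf a = 5) [(Subgroup.zpowers a).Normal] [IsCyclic (Subgroup.centralizer {a})]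
    (hconj : ∀ b : H, ∃ i : ℕ, ∀ x ∈ Subgroup.centralizer {a}, b * x * b⁻¹ = x ^ 3 ^ i) :
    ∃ b : H, orderOf b = 16 ∧ b⁻¹ * a * b = a ^ 4 := by
  let C := Subgroup.centralizer {a}
  obtain ⟨b, hb⟩ : ∃ b, b ∉ C := by
    by_contra! h
    let _ := IsCyclic.commGroup (α := C)
    exact hnc fun x y => congrArg Subtype.val (mul_comm (⟨x, h x⟩ : C) ⟨y, h y⟩)
  obtain ⟨c, hc⟩ := exists_orderOf_eq_four_centralizer hH ha
  have h9 : ∀ b ∉ C, ∀ x ∈ C, b * x * b⁻¹ = x ^ 9 := fun b =>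
    conj_eq_pow_nine hH hinv ha ((Subgroup.orderOf_coe c).trans hc) c.2 (hconj b)
  have hC : Nat.card C = 8 * 5 := by
    have hmul := C.card_mul_index
    rw [index_centralizer_eq_two ha hb h9] at hmul
    omega
  have hpow (n : ℕ) : ∀ x ∈ C, b ^ n * x * (b ^ n)⁻¹ = x ^ 9 ^ n := fun x =>
    conj_pow_eq_pow_pow (h9 b hb) n
  have hmem (n : ℕ) : b ^ n ∈ C ↔ 9 ^ n ≡ 1 [MOD 5] :=
    mem_centralizer_iff_modEq_one (hpow n a (self_mem_centralizer a)) ha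
  have hcomm : ∀ x ∈ C, x ^ 8 = 1 → Commute (b ^ 5) x := fun x hx hx8 =>
    mul_inv_eq_iff_eq_mul.mp <| by
      rw [hpow 5 x hx, show 9 ^ 5 = 8 * 7381 + 1 by norm_num, pow_succ, pow_mul, hx8, one_pow,
        one_mul]
  refine ⟨(b ^ 5)⁻¹, ?_, ?_⟩
  · rw [orderOf_inv]
    refine orderOf_eq_prime_pow (p := 2) (n := 3) ?_ ?_
    · refine pow_eight_ne_one hinv (by norm_num) hC ((hmem 5).not.mpr (by decide)) ?_ hcomm
      rw [← pow_mul]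
      exact (hmem _).mpr (by decide)
    · rw [← pow_mul, show 5 * 2 ^ (3 + 1) = 80 by norm_num, ← hH, pow_card_eq_one']
  · rw [inv_inv, hpow 5 a (self_mem_centralizer a), pow_eq_pow_iff_modEq, ha]
    decide

theorem IsFrobeniusAction.exists_metacyclic_generators (hφ : IsFrobeniusAction φ)
    (hA : Nat.card A = 81) (hA3 : ∀ x : A, x ^ 3 = 1) (hH : Nat.card H = 80)
    (hnc : ¬ ∀ x y : H, x * y = y * x) :
    ∃ a b : H, orderOf a = 5 ∧ orderOf b = 16 ∧ b⁻¹ * a * b = a ^ 4 := by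
  have : Finite A := Nat.finite_of_card_ne_zero (by omega)
  have : Finite H := Nat.finite_of_card_ne_zero (by omega)
  have : Nontrivial A := Finite.one_lt_card_iff_nontrivial.mp (by omega)
  obtain ⟨a, ha, hN⟩ := exists_normal_zpowers_of_orderOf_eq_five hH hφ.subsingleton_orderOf_eq_two
  have hirr := hφ.actsIrreducibly_zpowers hA ha
  have hcyc : IsCyclic (Subgroup.centralizer {a}) :=
    centralizer_zpowers a ▸ isCyclic_centralizer hφ.injective hirr
  have hconj := centralizer_zpowers a ▸
    exists_conj_eq_pow_of_mem_centralizer hφ.injective hirr Nat.prime_three hA3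
  obtain ⟨b, hb, hab⟩ := exists_orderOf_eq_sixteen hH hnc hφ.subsingleton_orderOf_eq_two ha hconj
  exact ⟨a, b, ha, hb, hab⟩

end CardEighty

namespace Metacyclic

open scoped Pointwise

variable {m n : ℕ} {e : ℤ}

/-- The generator `a` of `Metacyclic m n e`. -/
def a : Metacyclic m n e :=
  PresentedGroup.of true

/-- The generator `b` of `Metacyclic m n e`. -/
def b : Metacyclic m n e :=
  PresentedGroup.of false

theorem a_pow : (a : Metacyclic m n e) ^ m = 1 :=
  PresentedGroup.one_of_mem (Or.inl rfl)

theorem b_pow : (b : Metacyclic m n e) ^ n = 1 :=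
  PresentedGroup.one_of_mem (Or.inr (Or.inl rfl))

theorem inv_b_mul_a_mul_b : (b : Metacyclic m n e)⁻¹ * a * b = a ^ e :=
  mul_inv_eq_one.mp (PresentedGroup.one_of_mem (Or.inr (Or.inr rfl)))

/-- The homomorphism out of `Metacyclic m n e` sending `a` and `b` to elements that satisfy the
defining relations. -/
def lift {H : Type*} [Group H] {x y : H} (hx : x ^ m = 1) (hy : y ^ n = 1)
    (hxy : y⁻¹ * x * y = x ^ e) : Metacyclic m n e →* H :=
  PresentedGroup.toGroup (f := fun i => cond i x y) (by
    rintro r (rfl | rfl | rfl)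
    · simpa using hx
    · simpa using hy
    · simp [hxy])

section Lift

variable {H : Type*} [Group H] {x y : H} (hx : x ^ m = 1) (hy : y ^ n = 1)
  (hxy : y⁻¹ * x * y = x ^ e)

theorem lift_a : lift hx hy hxy a = x :=
  PresentedGroup.toGroup.of _

theorem lift_b : lift hx hy hxy b = y :=
  PresentedGroup.toGroup.of _

end Lift

theorem finite_zpowers_a [NeZero m] : Finite (Subgroup.zpowers (a : Metacyclic m n e)) :=
  finite_zpowers.mpr (isOfFinOrder_iff_pow_eq_one.mpr ⟨m, NeZero.pos m, a_pow⟩)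

theorem finite_zpowers_b [NeZero n] : Finite (Subgroup.zpowers (b : Metacyclic m n e)) :=
  finite_zpowers.mpr (isOfFinOrder_iff_pow_eq_one.mpr ⟨n, NeZero.pos n, b_pow⟩)

theorem normal_zpowers_a [NeZero m] : (Subgroup.zpowers (a : Metacyclic m n e)).Normal := by
  have := finite_zpowers_a (m := m) (n := n) (e := e)
  rw [← Subgroup.normalizer_eq_top_iff, eq_top_iff, ← PresentedGroup.closure_range_of,
    Subgroup.closure_le, Set.range_subset_iff]
  rintro (_ | _)
  · rw [SetLike.mem_coe, ← inv_mem_iff]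
    refine Subgroup.mem_normalizer_fintype ?_
    rintro _ ⟨i, rfl⟩
    refine ⟨e * i, ?_⟩
    calc (a : Metacyclic m n e) ^ (e * i)
      _ = (b⁻¹ * a * b⁻¹⁻¹) ^ i := by rw [inv_inv, inv_b_mul_a_mul_b, zpow_mul]
      _ = b⁻¹ * a ^ i * b⁻¹⁻¹ := conj_zpow
  · exact Subgroup.le_normalizer (Subgroup.mem_zpowers a)

theorem zpowers_b_mul_zpowers_a [NeZero m] :
    (Subgroup.zpowers (b : Metacyclic m n e) : Set (Metacyclic m n e)) *
      (Subgroup.zpowers (a : Metacyclic m n e) : Set (Metacyclic m n e)) = Set.univ := by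
  have := normal_zpowers_a (m := m) (n := n) (e := e)
  rw [← Subgroup.mul_normal, ← Subgroup.coe_top, SetLike.coe_set_eq, eq_top_iff,
    ← PresentedGroup.closure_range_of, Subgroup.closure_le, Set.range_subset_iff]
  rintro (_ | _)
  · exact Subgroup.mem_sup_left (Subgroup.mem_zpowers b)
  · exact Subgroup.mem_sup_right (Subgroup.mem_zpowers a)

theorem exists_eq_zpow_mul_zpow [NeZero m] (g : Metacyclic m n e) :
    ∃ j i : ℤ, b ^ j * a ^ i = g := by
  obtain ⟨_, ⟨j, rfl⟩, _, ⟨i, rfl⟩, hg⟩ := Set.mem_mul.mp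
    (zpowers_b_mul_zpowers_a.symm.subset (Set.mem_univ g))
  exact ⟨j, i, hg⟩

instance finite [NeZero m] [NeZero n] : Finite (Metacyclic m n e) := by
  have := finite_zpowers_a (m := m) (n := n) (e := e)
  have := finite_zpowers_b (m := m) (n := n) (e := e)
  rw [← Set.finite_univ_iff, ← zpowers_b_mul_zpowers_a]
  exact Set.Finite.mul (Set.toFinite _) (Set.toFinite _)

theorem card_le [NeZero m] [NeZero n] : Nat.card (Metacyclic m n e) ≤ m * n := by
  rw [← Nat.card_univ, ← zpowers_b_mul_zpowers_a, mul_comm m]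
  refine Set.natCard_mul_le.trans (Nat.mul_le_mul ?_ ?_)
  · exact (Nat.card_zpowers _).trans_le (orderOf_le_of_pow_eq_one (NeZero.pos n) b_pow)
  · exact (Nat.card_zpowers _).trans_le (orderOf_le_of_pow_eq_one (NeZero.pos m) a_pow)

theorem orderOf_a [NeZero n] (he : (e : ZMod m) ^ n = 1) :
    orderOf (a : Metacyclic m n e) = m := by
  let u := Units.ofPowEqOne (e : ZMod m) n he (NeZero.ne n)
  have hu : u⁻¹ ^ n = 1 := by rw [inv_pow, inv_eq_one]; exact Units.ext he
  let f : Metacyclic m n e →* Equiv.Perm (ZMod m) :=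
    lift (x := Equiv.addRight 1) (y := MulAction.toPermHom (ZMod m)ˣ (ZMod m) u⁻¹)
      (by simp)
      (by rw [← map_pow, hu, map_one])
      (Equiv.ext fun i => by
        have hue : (u : ZMod m) = e := rfl
        simp [Units.smul_def, ← hue])
  refine (orderOf_dvd_of_pow_eq_one a_pow).antisymm ?_
  have hf : f a ^ orderOf (a : Metacyclic m n e) = 1 := by
    rw [← map_pow, pow_orderOf_eq_one, map_one]
  rw [lift_a, Equiv.nsmul_addRight] at hf
  simpa [ZMod.natCast_eq_zero_iff] using DFunLike.congr_fun hf 0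

theorem orderOf_b : orderOf (b : Metacyclic m n e) = n := by
  let f : Metacyclic m n e →* Multiplicative (ZMod n) :=
    lift (x := 1) (y := Multiplicative.ofAdd 1) (one_pow _)
      (by rw [← ofAdd_nsmul]; simp) (by simp)
  refine (orderOf_dvd_of_pow_eq_one b_pow).antisymm ?_
  have hf : orderOf (f b) = n := by
    rw [lift_b, orderOf_ofAdd_eq_addOrderOf, ZMod.addOrderOf_one]
  exact hf.symm.dvd.trans (orderOf_map_dvd f b)

theorem card_eq [NeZero m] [NeZero n] (hmn : m.Coprime n) (he : (e : ZMod m) ^ n = 1) :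
    Nat.card (Metacyclic m n e) = m * n := by
  refine card_le.antisymm (Nat.le_of_dvd Nat.card_pos (hmn.mul_dvd_of_dvd_of_dvd ?_ ?_))
  · exact (orderOf_a he).symm.dvd.trans (orderOf_dvd_natCard _)
  · exact orderOf_b.symm.dvd.trans (orderOf_dvd_natCard _)

theorem nonempty_mulEquiv [NeZero m] [NeZero n] (hmn : m.Coprime n) {H : Type*} [Group H]
    (hH : Nat.card H = m * n) {x y : H} (hx : orderOf x = m) (hy : orderOf y = n)
    (hxy : y⁻¹ * x * y = x ^ e) : Nonempty (H ≃* Metacyclic m n e) := by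
  have : Finite H := Nat.finite_of_card_ne_zero (hH ▸ mul_ne_zero (NeZero.ne m) (NeZero.ne n))
  let f := lift (hx ▸ pow_orderOf_eq_one x) (hy ▸ pow_orderOf_eq_one y) hxy
  have hsurj : Function.Surjective f := by
    have hxf : x ∈ f.range := ⟨a, lift_a _ _ _⟩
    have hyf : y ∈ f.range := ⟨b, lift_b _ _ _⟩
    refine MonoidHom.range_eq_top.mp (Subgroup.eq_top_of_le_card _ ?_)
    rw [hH]
    refine Nat.le_of_dvd Nat.card_pos (hmn.mul_dvd_of_dvd_of_dvd ?_ ?_)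
    · exact hx.symm.dvd.trans (Subgroup.orderOf_dvd_natCard _ hxf)
    · exact hy.symm.dvd.trans (Subgroup.orderOf_dvd_natCard _ hyf)
  have hbij : Function.Bijective f :=
    Function.Surjective.bijective_of_nat_card_le hsurj (card_le.trans hH.ge)
  exact ⟨(MulEquiv.ofBijective f hbij).symm⟩

end Metacyclic

section Inversion

variable {H : Type*} [Group H] {x y : H}

theorem commute_sq_of_semiconjBy_inv (h : SemiconjBy y x x⁻¹) : Commute (y ^ 2) x := by
  have hinv : SemiconjBy y x⁻¹ x := by simpa using h.inv_right
  exact (sq y).symm ▸ hinv.mul_left h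

theorem mul_zpow_sq_of_semiconjBy_inv (h : SemiconjBy y x x⁻¹) (i : ℤ) :
    (y * x ^ i) ^ 2 = y ^ 2 := by
  have hinv : SemiconjBy y x⁻¹ x := by simpa using h.inv_right
  calc (y * x ^ i) ^ 2
    _ = y * (x ^ i * y) * x ^ i := by simp only [sq, mul_assoc]
    _ = y * (y * x⁻¹ ^ i) * x ^ i := by rw [(hinv.zpow_right i).eq]
    _ = y ^ 2 := by rw [inv_zpow, ← mul_assoc, inv_mul_cancel_right, sq]

end Inversion

namespace Metacyclic

theorem semiconjBy_b_a : SemiconjBy (b : Metacyclic 5 16 4) a a⁻¹ := by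
  have ha : (a : Metacyclic 5 16 4) ^ (4 : ℤ) = a⁻¹ := by
    rw [eq_inv_iff_mul_eq_one, ← zpow_add_one]
    exact_mod_cast a_pow (m := 5)
  have h : (b : Metacyclic 5 16 4)⁻¹ * a * b = a⁻¹ := inv_b_mul_a_mul_b.trans ha
  rw [← SemiconjBy.inv_right_iff, inv_inv, SemiconjBy, ← h]
  group

theorem orderOf_sq_b_mul_a : orderOf ((b : Metacyclic 5 16 4) ^ 2 * a) = 40 := by
  have ha : orderOf (a : Metacyclic 5 16 4) = 5 := orderOf_a (by decide)
  have hb : orderOf ((b : Metacyclic 5 16 4) ^ 2) = 8 := by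
    rw [orderOf_pow, orderOf_b]
    rfl
  rw [(commute_sq_of_semiconjBy_inv semiconjBy_b_a).orderOf_mul_eq_mul_orderOf_of_coprime
    (by rw [ha, hb]; norm_num), ha, hb]

theorem sq_b_zpow_mul_a_zpow_mem (t i : ℤ) :
    ((b : Metacyclic 5 16 4) ^ 2) ^ t * a ^ i ∈ Subgroup.zpowers (b ^ 2 * a) := by
  have hcomm := commute_sq_of_semiconjBy_inv semiconjBy_b_a
  have ha : (a : Metacyclic 5 16 4) ^ 5 = 1 := a_pow
  have hb : (b : Metacyclic 5 16 4) ^ 16 = 1 := b_pow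
  refine mul_mem (zpow_mem (Subgroup.mem_zpowers_iff.mpr ⟨25, ?_⟩) t)
    (zpow_mem (Subgroup.mem_zpowers_iff.mpr ⟨16, ?_⟩) i)
  · calc ((b : Metacyclic 5 16 4) ^ 2 * a) ^ (25 : ℤ)
      _ = (b ^ 16) ^ 3 * b ^ 2 * (a ^ 5) ^ 5 := by
        rw [hcomm.mul_zpow]
        group
      _ = b ^ 2 := by simp only [ha, hb, one_pow, one_mul, mul_one]
  · calc ((b : Metacyclic 5 16 4) ^ 2 * a) ^ (16 : ℤ)
      _ = (b ^ 16) ^ 2 * (a ^ 5) ^ 3 * a := by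
        rw [hcomm.mul_zpow]
        group
      _ = a := by simp only [ha, hb, one_pow, one_mul]

theorem orderOf_eq_sixteen_of_notMem {x : Metacyclic 5 16 4}
    (hx : x ∉ Subgroup.zpowers (b ^ 2 * a)) : orderOf x = 16 := by
  obtain ⟨j, i, rfl⟩ := exists_eq_zpow_mul_zpow x
  obtain ⟨t, rfl | rfl⟩ := j.even_or_odd'
  · rw [zpow_mul] at hx
    exact absurd (sq_b_zpow_mul_a_zpow_mem t i) hx
  have hcomm : Commute ((b ^ 2) ^ t) (b * a ^ i : Metacyclic 5 16 4) :=
    (((Commute.refl b).pow_left 2).mul_right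
      ((commute_sq_of_semiconjBy_inv semiconjBy_b_a).zpow_right i)).zpow_left t
  have hsq : (b ^ (2 * t + 1) * a ^ i : Metacyclic 5 16 4) ^ 2 = b ^ (4 * t + 2) := by
    calc (b ^ (2 * t + 1) * a ^ i : Metacyclic 5 16 4) ^ 2
      _ = ((b ^ 2) ^ t * (b * a ^ i)) ^ 2 := by
        rw [zpow_add_one, zpow_mul, mul_assoc, zpow_ofNat]
      _ = ((b ^ 2) ^ t) ^ 2 * b ^ 2 := by
        rw [hcomm.mul_pow, mul_zpow_sq_of_semiconjBy_inv semiconjBy_b_a]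
      _ = b ^ (4 * t + 2) := by group
  refine orderOf_eq_prime_pow (p := 2) (n := 3) ?_ ?_
  · rw [show 2 ^ 3 = 2 * 4 by rfl, pow_mul, hsq, ← zpow_natCast, ← zpow_mul,
      ← orderOf_dvd_iff_zpow_eq_one, orderOf_b]
    omega
  · rw [show 2 ^ (3 + 1) = 2 * 8 by rfl, pow_mul, hsq, ← zpow_natCast, ← zpow_mul,
      ← orderOf_dvd_iff_zpow_eq_one, orderOf_b]
    omega

theorem card_five_sixteen_four : Nat.card (Metacyclic 5 16 4) = 80 :=
  card_eq (by norm_num) (by decide)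

theorem perfectOrderClasses_five_sixteen_four : PerfectOrderClasses (Metacyclic 5 16 4) := by
  have hC : Nat.card (Subgroup.zpowers ((b : Metacyclic 5 16 4) ^ 2 * a)) = 40 := by
    rw [Nat.card_zpowers, orderOf_sq_b_mul_a]
  refine perfectOrderClasses_of_orderOf_eq_of_notMem
    (fun _ => orderOf_eq_sixteen_of_notMem) ?_ ?_ ?_
  all_goals rw [hC]
  · norm_num
  · rw [card_five_sixteen_four]
    norm_num
  · rw [card_five_sixteen_four]
    decide

end Metacyclic

namespace IsFrobeniusAction

variable {H K K' : Type*} [Group H] [Group K] [Group K'] {φ : H →* MulAut K}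

theorem one_lt_of_mulEquiv_homocyclic [Finite H] [Nontrivial K] (hφ : IsFrobeniusAction φ)
    {p r m : ℕ} (e : K ≃* Homocyclic r m) (hcard : Nat.card H + 1 = p ^ r)
    (hnc : ¬ ∀ x y : H, x * y = y * x) : 1 < r := by
  by_contra! hr
  interval_cases r
  · exact Nat.card_pos.ne' (by simpa using hcard)
  · have := isCyclic_of_injective (e.trans (MulEquiv.funUnique (Fin 1) _)).toMonoidHom
      (MulEquiv.injective _)
    exact hnc hφ.mul_comm_of_isCyclic

theorem congr (hφ : IsFrobeniusAction φ) (e : K ≃* K') :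
    IsFrobeniusAction ((MulAut.congr e).toMonoidHom.comp φ) := fun h hh x hx => by
  have hfix : φ h (e.symm x) = e.symm x := e.eq_symm_apply.mpr hx
  simpa using hφ h hh _ hfix

theorem nonempty_mulEquiv_metacyclic (hφ : IsFrobeniusAction φ) {k : ℕ} (hk : 0 < k)
    (e : K ≃* Homocyclic 4 (3 ^ k)) (hH : Nat.card H = 80) (hnc : ¬ ∀ x y : H, x * y = y * x) :
    Nonempty (H ≃* Metacyclic 5 16 4) := by
  let Ω : Subgroup (Homocyclic 4 (3 ^ k)) := (powMonoidHom 3).ker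
  have hΩ : Ω.Characteristic := Subgroup.characteristic_iff_le_comap.mpr fun f x hx => by
    have hx3 : x ^ 3 = 1 := hx
    change f x ^ 3 = 1
    rw [← map_pow, hx3, map_one]
  have hcard : Nat.card Ω = 81 := by
    refine (card_pow_eq_one_homocyclic 4 3).trans ?_
    rw [Nat.gcd_eq_right (dvd_pow_self 3 hk.ne')]
    rfl
  have hΩφ := (hφ.congr e).characteristic_comp Ω
  obtain ⟨a, b, ha, hb, hab⟩ :=
    hΩφ.exists_metacyclic_generators hcard (fun x => Subtype.ext x.2) hH hnc
  exact Metacyclic.nonempty_mulEquiv (by norm_num) hH ha hb (by exact_mod_cast hab)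

end IsFrobeniusAction

namespace IsFrobeniusWith

variable {G : Type*} [Group G] {K H : Subgroup G}

theorem isFrobeniusAction [K.Normal] (hF : IsFrobeniusWith K H) :
    IsFrobeniusAction ((MulAut.conjNormal (H := K)).comp H.subtype) := by
  obtain ⟨-, -, -, -, -, hfix⟩ := hF
  intro h hh k hk
  by_contra hk1
  exact hfix h h.2 (by simpa using hh) k k.2 (by simpa using hk1)
    (by simpa using congrArg Subtype.val hk)

theorem mul_bijective (hF : IsFrobeniusWith K H) :
    Function.Bijective (fun x : K × H => (x.1 * x.2 : G)) := by
  obtain ⟨-, -, -, hdisj, hmul, -⟩ := hF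
  refine ⟨Subgroup.mul_injective_of_disjoint (disjoint_iff.mpr hdisj), fun g => ?_⟩
  obtain ⟨k, hk, h, hh, rfl⟩ := hmul g
  exact ⟨(⟨k, hk⟩, ⟨h, hh⟩), rfl⟩

theorem card_eq (hF : IsFrobeniusWith K H) : Nat.card G = Nat.card K * Nat.card H := by
  rw [← Nat.card_congr (Equiv.ofBijective _ hF.mul_bijective), Nat.card_prod]

-- Every element of a coset `K h` with `h ≠ 1` is conjugate to `h` under `K`.
theorem orderOf_mul [Finite G] (hF : IsFrobeniusWith K H) (k : K) {h : H} (hh : h ≠ 1) :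
    orderOf (k * h : G) = orderOf h := by
  have := hF.2.2.1
  obtain ⟨c, hc⟩ := (hF.isFrobeniusAction h hh).commutatorMap_surjective k
  have hconj : (k * h : G) = c * h * (c : G)⁻¹ := by
    rw [← hc]
    simp [MonoidHom.commutatorMap, div_eq_mul_inv, mul_assoc]
  rw [hconj, ← MulAut.conj_apply, MulEquiv.orderOf_eq, Subgroup.orderOf_coe]

theorem orderOf_mul_eq_iff [Finite G] (hF : IsFrobeniusWith K H) {n : ℕ} (hn : n ≠ 1) (k : K)
    (h : H) : orderOf (k * h : G) = n ↔ (orderOf k = n ∧ h = 1) ∨ orderOf h = n := by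
  by_cases hh : h = 1
  · simp [hh, hn.symm]
  · simp [hh, hF.orderOf_mul k hh]

theorem orderCount_eq [Finite G] (hF : IsFrobeniusWith K H) {n : ℕ} (hn : n ≠ 1) :
    orderCount G n = orderCount K n + Nat.card K * orderCount H n := by
  classical
  have e : {g : G // orderOf g = n} ≃ {k : K // orderOf k = n} ⊕ K × {h : H // orderOf h = n} :=
    calc {g : G // orderOf g = n}
      _ ≃ {x : K × H // orderOf (x.1 * x.2 : G) = n} :=
        ((Equiv.ofBijective _ hF.mul_bijective).subtypeEquiv fun _ => Iff.rfl).symm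
      _ ≃ {x : K × H // (orderOf x.1 = n ∧ x.2 = 1) ∨ orderOf x.2 = n} :=
        Equiv.subtypeEquivRight fun x => hF.orderOf_mul_eq_iff hn x.1 x.2
      _ ≃ {x : K × H // orderOf x.1 = n ∧ x.2 = 1} ⊕ {x : K × H // orderOf x.2 = n} :=
        subtypeOrEquiv _ _ <| by
          rw [Pi.disjoint_iff]
          rintro ⟨x, y⟩
          simp only [Prop.disjoint_iff]
          rintro ⟨⟨-, rfl⟩, h⟩
          exact hn (by simpa using h.symm)
      _ ≃ {k : K // orderOf k = n} ⊕ K × {h : H // orderOf h = n} := Equiv.sumCongr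
        { toFun := fun x => ⟨x.1.1, x.2.1⟩
          invFun := fun k => ⟨(k.1, 1), k.2, rfl⟩
          left_inv := fun ⟨⟨x, y⟩, _, hy⟩ => by
            obtain rfl : y = 1 := hy
            rfl
          right_inv := fun _ => rfl }
        { toFun := fun x => (x.1.1, ⟨x.1.2, x.2⟩)
          invFun := fun k => ⟨(k.1, k.2.1), k.2.2⟩
          left_inv := fun _ => rfl
          right_inv := fun _ => rfl }
  rw [orderCount, Nat.card_congr e, Nat.card_sum, Nat.card_prod]
  rfl

variable [Finite G]

theorem orderCount_eq_zero_or (hF : IsFrobeniusWith K H) {n : ℕ} (hn : n ≠ 1) :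
    orderCount K n = 0 ∨ orderCount H n = 0 := by
  have := hF.2.2.1
  by_contra! h0
  exact hn (Nat.eq_one_of_dvd_coprimes hF.isFrobeniusAction.coprime_card
    (dvd_natCard_of_orderCount_ne_zero h0.2) (dvd_natCard_of_orderCount_ne_zero h0.1))

theorem perfectOrderClasses_iff (hF : IsFrobeniusWith K H) :
    PerfectOrderClasses G ↔ PerfectOrderClasses H ∧
      ∀ n, n ≠ 1 → orderCount K n ≠ 0 → orderCount K n ∣ Nat.card K * Nat.card H := by
  have hK : Nat.card K ≠ 0 := Nat.card_pos.ne'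
  refine ⟨fun hG => ⟨fun n hn => ?_, fun n hn h0 => ?_⟩, fun ⟨hH, hKn⟩ n hn => ?_⟩
  · rcases eq_or_ne n 1 with rfl | hn1
    · simp [orderCount]
    refine or_iff_not_imp_left.mpr fun h0 => ?_
    have hcount := hF.orderCount_eq hn1
    rw [(hF.orderCount_eq_zero_or hn1).resolve_right h0, zero_add] at hcount
    have hdvd := (hG n hn).resolve_left (hcount ▸ mul_ne_zero hK h0)
    rw [hcount, hF.card_eq] at hdvd
    exact Nat.dvd_of_mul_dvd_mul_left (Nat.pos_of_ne_zero hK) hdvd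
  · have hcount := hF.orderCount_eq hn
    rw [(hF.orderCount_eq_zero_or hn).resolve_left h0, mul_zero, add_zero] at hcount
    have hpos : 0 < n := Nat.pos_of_dvd_of_pos (dvd_natCard_of_orderCount_ne_zero h0) Nat.card_pos
    rw [← hcount, ← hF.card_eq]
    exact (hG n hpos).resolve_left (hcount ▸ h0)
  · rcases eq_or_ne n 1 with rfl | hn1
    · simp [orderCount]
    rw [hF.orderCount_eq hn1, hF.card_eq]
    rcases hF.orderCount_eq_zero_or hn1 with h0 | h0
    · rw [h0, zero_add]
      exact (hH n hn).imp (by rintro h; rw [h, mul_zero]) (mul_dvd_mul_left _)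
    · rw [h0, mul_zero, add_zero]
      exact or_iff_not_imp_left.mpr (hKn n hn1)

theorem exists_homocyclic_of_perfectOrderClasses (hF : IsFrobeniusWith K H)
    (h2 : 2 ∣ Nat.card H) (hG : PerfectOrderClasses G) :
    ∃ p k r, p.Prime ∧ 0 < k ∧ Nat.card H + 1 = p ^ r ∧ Nonempty (K ≃* Homocyclic r (p ^ k)) := by
  have := hF.2.2.1
  have : Nontrivial K := K.nontrivial_iff_ne_bot.mpr hF.1
  let _ : CommGroup K :=
    { (inferInstance : Group K) with mul_comm := hF.isFrobeniusAction.mul_comm_of_two_dvd_card h2 }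
  exact hF.isFrobeniusAction.exists_homocyclic_of_orderCount_dvd
    (Nat.le_of_dvd Nat.card_pos h2) (hF.perfectOrderClasses_iff.mp hG).2

theorem perfectOrderClasses_of_homocyclic (hF : IsFrobeniusWith K H) {p k r : ℕ} (hp : p.Prime)
    (e : K ≃* Homocyclic r (p ^ k)) (hcard : Nat.card H + 1 = p ^ r)
    (hH : PerfectOrderClasses H) : PerfectOrderClasses G := by
  refine hF.perfectOrderClasses_iff.mpr ⟨hH, fun n hn h0 => ?_⟩
  rw [orderCount_congr e] at h0 ⊢
  rw [Nat.card_congr e.toEquiv, Nat.eq_sub_of_add_eq hcard]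
  exact orderCount_homocyclic_dvd r k hp hn h0

end IsFrobeniusWith

/-- Frobenius groups with a non-nilpotent `{2,5}`-complement have perfect order classes
iff the kernel is a homocyclic 3-group of rank 4 and the complement is
`⟨a, b ∣ a^5 = 1, b^16 = 1, b⁻¹ a b = a^4⟩`. -/
theorem frobenius_two_five_complement_perfectOrderClasses_iff
    {G : Type*} [Group G] [Fintype G] (K H : Subgroup G)
    (hFrob : IsFrobeniusWith K H)
    (hnotnil : ¬ Group.IsNilpotent H)
    (hdiv : ∀ p : ℕ, p.Prime → p ∣ Nat.card H → p = 2 ∨ p = 5) :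
    PerfectOrderClasses G ↔
      (∃ k : ℕ, 0 < k ∧
        Nonempty (K ≃* (Fin 4 → Multiplicative (ZMod (3 ^ k))))) ∧
        Nonempty (H ≃* Metacyclic 5 16 4) := by
  have := hFrob.2.2.1
  have : Nontrivial K := K.nontrivial_iff_ne_bot.mpr hFrob.1
  have hφ := hFrob.isFrobeniusAction
  have hnc : ¬ ∀ x y : H, x * y = y * x := fun h =>
    let _ : CommGroup H := { (inferInstance : Group H) with mul_comm := h }
    hnotnil CommGroup.isNilpotent
  have h2 : 2 ∣ Nat.card H :=
    dvd_card_of_not_isNilpotent Nat.prime_five (fun l hl hd => (hdiv l hl hd).symm) hnotnil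
  have h5 : 5 ∣ Nat.card H := dvd_card_of_not_isNilpotent Nat.prime_two hdiv hnotnil
  constructor
  · intro hG
    obtain ⟨p, k, r, hp, hk, hcard, ⟨e⟩⟩ := hFrob.exists_homocyclic_of_perfectOrderClasses h2 hG
    obtain ⟨rfl, rfl⟩ := eq_three_and_four_of_prime_pow_eq hp
      (hφ.one_lt_of_mulEquiv_homocyclic e hcard hnc) h2 h5 hdiv hcard
    exact ⟨⟨k, hk, ⟨e⟩⟩, hφ.nonempty_mulEquiv_metacyclic hk e (by omega) hnc⟩
  · rintro ⟨⟨k, -, ⟨e⟩⟩, ⟨f⟩⟩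
    have hcard : Nat.card H = 80 :=
      (Nat.card_congr f.toEquiv).trans Metacyclic.card_five_sixteen_four
    exact hFrob.perfectOrderClasses_of_homocyclic Nat.prime_three e (by omega)
      (Metacyclic.perfectOrderClasses_five_sixteen_four.of_mulEquiv f.symm)
end

section
/- If n is a positive integer such that n² - 1 is divisible by 2, 3 and 5, and by no other prime, then n ∈ {11, 19, 31, 49, 161}. -/
/-! Since `n` is odd, `n = 2 * m + 1` and `n ^ 2 - 1 = 4 * m * (m + 1)`, so `m` and `m + 1` have
no prime factor outside `{2, 3, 5}`. They are coprime and `30 ∣ m * (m + 1)`, so one of them is a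
power `p ^ k` of some `p ∈ {2, 3, 5}` and its neighbour `p ^ k ± 1` is divisible by `30 / p`.
Let `d` be the order of `p` modulo `a`. If `a ∣ p ^ k - 1`, then `p ^ d - 1 ∣ p ^ k - 1`; if
`a ∣ p ^ k + 1` with `a > 2` and `d` even, then `a ∣ p ^ (d / 2) + 1 ∣ p ^ k + 1`. Whenever the
divisor so produced has a prime factor outside `{2, 3, 5}`, or is not itself divisible by `a`, the
modulus `a` is excluded, and finitely many such moduli pin down `p ^ k ± 1`.
-/

lemma dvd_sub_one_iff_natCast_eq_one {a x : ℕ} (hx : x ≠ 0) :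
    a ∣ x - 1 ↔ (x : ZMod a) = 1 := by
  rw [← Nat.modEq_iff_dvd' (Nat.one_le_iff_ne_zero.2 hx), Nat.ModEq.comm,
    ← ZMod.natCast_eq_natCast_iff, Nat.cast_one]

lemma dvd_add_one_iff_natCast_eq_neg_one {a x : ℕ} : a ∣ x + 1 ↔ (x : ZMod a) = -1 := by
  rw [← ZMod.natCast_eq_zero_iff, Nat.cast_add, Nat.cast_one, eq_neg_iff_add_eq_zero]

lemma pow_orderOf_sub_one_dvd_pow_sub_one {a p k : ℕ} (h : a ∣ p ^ k - 1) :
    p ^ orderOf (p : ZMod a) - 1 ∣ p ^ k - 1 := by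
  rcases eq_or_ne p 0 with rfl | hp
  · rw [Nat.sub_eq_zero_of_le (zero_pow_le_one k)]
    exact dvd_zero _
  rw [dvd_sub_one_iff_natCast_eq_one (pow_ne_zero k hp), Nat.cast_pow] at h
  exact Nat.pow_sub_one_dvd_pow_sub_one p (orderOf_dvd_of_pow_eq_one h)

lemma exists_odd_eq_mul_of_dvd_pow_add_one {a p e k : ℕ} (ha : 2 < a)
    (he : orderOf (p : ZMod a) = 2 * e) (h : a ∣ p ^ k + 1) : ∃ j, Odd j ∧ k = e * j := by
  have : Fact (2 < a) := ⟨ha⟩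
  have hk : (p : ZMod a) ^ k = -1 := by
    rwa [dvd_add_one_iff_natCast_eq_neg_one, Nat.cast_pow] at h
  have hdvd : 2 * e ∣ 2 * k := by
    rw [← he, orderOf_dvd_iff_pow_eq_one, mul_comm, pow_mul, hk, neg_one_sq]
  obtain ⟨j, rfl⟩ := Nat.dvd_of_mul_dvd_mul_left two_pos hdvd
  refine ⟨j, Nat.not_even_iff_odd.1 fun hj ↦ ?_, rfl⟩
  have hone : (p : ZMod a) ^ (e * j) = 1 := by
    rw [← orderOf_dvd_iff_pow_eq_one, he, mul_comm 2]
    exact mul_dvd_mul_left e hj.two_dvd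
  exact ZMod.neg_one_ne_one (hk.symm.trans hone)

lemma pow_add_one_dvd_pow_add_one_of_orderOf_eq {a p e k : ℕ} (ha : 2 < a)
    (he : orderOf (p : ZMod a) = 2 * e) (h : a ∣ p ^ k + 1) : p ^ e + 1 ∣ p ^ k + 1 := by
  obtain ⟨j, hj, rfl⟩ := exists_odd_eq_mul_of_dvd_pow_add_one ha he h
  simpa only [pow_mul, one_pow] using hj.nat_add_dvd_pow_add_pow (p ^ e) 1

lemma dvd_pow_add_one_of_orderOf_eq {a p e k : ℕ} (ha : 2 < a)
    (he : orderOf (p : ZMod a) = 2 * e) (h : a ∣ p ^ k + 1) : a ∣ p ^ e + 1 := by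
  obtain ⟨j, ⟨i, rfl⟩, rfl⟩ := exists_odd_eq_mul_of_dvd_pow_add_one ha he h
  have hpow : (p : ZMod a) ^ (e * (2 * i + 1)) = (p : ZMod a) ^ e := by
    rw [show e * (2 * i + 1) = 2 * e * i + e by ring, pow_add, pow_mul, ← he, pow_orderOf_eq_one,
      one_pow, one_mul]
  rw [dvd_add_one_iff_natCast_eq_neg_one, Nat.cast_pow] at h ⊢
  rwa [← hpow]

lemma not_dvd_pow_sub_one_self {p k : ℕ} (h : p ^ k - 1 ≠ 0) : ¬ p ∣ p ^ k - 1 := by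
  intro hdvd
  have hk : k ≠ 0 := by rintro rfl; simp at h
  have hp : p ∣ 1 := by
    simpa only [Nat.sub_sub_self (show 1 ≤ p ^ k by omega)] using
      Nat.dvd_sub (dvd_pow_self p hk) hdvd
  simp [Nat.dvd_one.1 hp] at h

lemma not_dvd_pow_add_one_self {p k : ℕ} (hp : 2 < p) : ¬ p ∣ p ^ k + 1 := by
  intro hdvd
  rcases eq_or_ne k 0 with rfl | hk
  · exact absurd (Nat.le_of_dvd two_pos hdvd) (by omega)
  · have := Nat.dvd_one.1 ((Nat.dvd_add_right (dvd_pow_self p hk)).1 hdvd)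
    omega

section FactoredNumbers

open Nat (factoredNumbers)

variable {s : Finset ℕ}

lemma eq_of_dvd_of_mem_factoredNumbers {x y : ℕ} (hy : y ∈ factoredNumbers s) (hxy : x ∣ y)
    (h : ∀ p ∈ s, ¬ x * p ∣ y) : y = x := by
  obtain ⟨t, rfl⟩ := hxy
  suffices t = 1 by rw [this, mul_one]
  by_contra ht
  obtain ⟨p, hp, hpt⟩ := Nat.exists_prime_and_dvd ht
  exact h p (Nat.mem_factoredNumbers'.1 hy p hp (hpt.mul_left x)) (mul_dvd_mul_left x hpt)

lemma exists_eq_pow_of_coprime {x y p : ℕ} (hx : x ∈ factoredNumbers s) (hxy : x.Coprime y)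
    (h : ∀ q ∈ s, q ≠ p → q ∣ y) : ∃ k, x = p ^ k := by
  refine ⟨_, Nat.eq_prime_pow_of_unique_prime_dvd hx.1 fun {q} hq hqx ↦ ?_⟩
  by_contra hqp
  exact Nat.not_coprime_of_dvd_of_dvd hq.one_lt hqx
    (h q (Nat.mem_factoredNumbers'.1 hx q hq hqx) hqp) hxy

lemma not_dvd_pow_sub_one_of_orderOf_eq {a p d k q : ℕ} (hy : p ^ k - 1 ∈ factoredNumbers s)
    (hd : orderOf (p : ZMod a) = d) (hq : q.Prime) (hqs : q ∉ s) (hqd : q ∣ p ^ d - 1) :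
    ¬ a ∣ p ^ k - 1 := by
  intro h
  have hdk : p ^ d - 1 ∣ p ^ k - 1 := hd ▸ pow_orderOf_sub_one_dvd_pow_sub_one h
  exact hqs (Nat.mem_factoredNumbers'.1 hy q hq (hqd.trans hdk))

lemma not_dvd_pow_add_one_of_orderOf_eq {a p e k q : ℕ} (hy : p ^ k + 1 ∈ factoredNumbers s)
    (ha : 2 < a) (he : orderOf (p : ZMod a) = 2 * e) (hq : q.Prime) (hqs : q ∉ s)
    (hqe : q ∣ p ^ e + 1) : ¬ a ∣ p ^ k + 1 := fun h ↦
  hqs (Nat.mem_factoredNumbers'.1 hy q hq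
    (hqe.trans (pow_add_one_dvd_pow_add_one_of_orderOf_eq ha he h)))

lemma two_pow_sub_one_eq_fifteen {k : ℕ} (hy : 2 ^ k - 1 ∈ factoredNumbers {2, 3, 5})
    (h15 : 15 ∣ 2 ^ k - 1) : 2 ^ k - 1 = 15 := by
  have ord9 : orderOf ((2 : ℕ) : ZMod 9) = 6 := (orderOf_eq_iff (by decide)).2 (by decide)
  have ord25 : orderOf ((2 : ℕ) : ZMod 25) = 20 := (orderOf_eq_iff (by decide)).2 (by decide)
  have h2 : ¬ 2 ∣ 2 ^ k - 1 := not_dvd_pow_sub_one_self hy.1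
  have h9 : ¬ 9 ∣ 2 ^ k - 1 := not_dvd_pow_sub_one_of_orderOf_eq (q := 7) hy ord9
    (by norm_num) (by decide) (by norm_num)
  have h25 : ¬ 25 ∣ 2 ^ k - 1 := not_dvd_pow_sub_one_of_orderOf_eq (q := 11) hy ord25
    (by norm_num) (by decide) (by norm_num)
  exact eq_of_dvd_of_mem_factoredNumbers hy h15 fun p hp ↦ by fin_cases hp <;> omega

lemma not_fifteen_dvd_two_pow_add_one (k : ℕ) : ¬ 15 ∣ 2 ^ k + 1 := by
  intro h
  have ord15 : orderOf ((2 : ℕ) : ZMod 15) = 2 * 2 := (orderOf_eq_iff (by decide)).2 (by decide)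
  have : 15 ∣ 2 ^ 2 + 1 := dvd_pow_add_one_of_orderOf_eq (by norm_num) ord15 h
  omega

lemma three_pow_sub_one_eq_eighty {k : ℕ} (hy : 3 ^ k - 1 ∈ factoredNumbers {2, 3, 5})
    (h10 : 10 ∣ 3 ^ k - 1) : 3 ^ k - 1 = 80 := by
  have ord10 : orderOf ((3 : ℕ) : ZMod 10) = 4 := (orderOf_eq_iff (by decide)).2 (by decide)
  have ord25 : orderOf ((3 : ℕ) : ZMod 25) = 20 := (orderOf_eq_iff (by decide)).2 (by decide)
  have ord32 : orderOf ((3 : ℕ) : ZMod 32) = 8 := (orderOf_eq_iff (by decide)).2 (by decide)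
  have h80 : 3 ^ 4 - 1 ∣ 3 ^ k - 1 := ord10 ▸ pow_orderOf_sub_one_dvd_pow_sub_one h10
  have h3 : ¬ 3 ∣ 3 ^ k - 1 := not_dvd_pow_sub_one_self hy.1
  have h25 : ¬ 25 ∣ 3 ^ k - 1 := not_dvd_pow_sub_one_of_orderOf_eq (q := 11) hy ord25
    (by norm_num) (by decide) (by norm_num)
  have h32 : ¬ 32 ∣ 3 ^ k - 1 := not_dvd_pow_sub_one_of_orderOf_eq (q := 41) hy ord32
    (by norm_num) (by decide) (by norm_num)
  exact eq_of_dvd_of_mem_factoredNumbers hy h80 fun p hp ↦ by fin_cases hp <;> omega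

lemma three_pow_add_one_eq_ten {k : ℕ} (hy : 3 ^ k + 1 ∈ factoredNumbers {2, 3, 5})
    (h10 : 10 ∣ 3 ^ k + 1) : 3 ^ k + 1 = 10 := by
  have ord20 : orderOf ((3 : ℕ) : ZMod 20) = 2 * 2 := (orderOf_eq_iff (by decide)).2 (by decide)
  have ord25 : orderOf ((3 : ℕ) : ZMod 25) = 2 * 10 := (orderOf_eq_iff (by decide)).2 (by decide)
  have h3 : ¬ 3 ∣ 3 ^ k + 1 := not_dvd_pow_add_one_self (by norm_num)
  have h20 : ¬ 20 ∣ 3 ^ k + 1 := fun h ↦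
    absurd (dvd_pow_add_one_of_orderOf_eq (by norm_num) ord20 h) (by norm_num)
  have h25 : ¬ 25 ∣ 3 ^ k + 1 := not_dvd_pow_add_one_of_orderOf_eq (q := 1181) hy (by norm_num)
    ord25 (by norm_num) (by decide) (by norm_num)
  exact eq_of_dvd_of_mem_factoredNumbers hy h10 fun p hp ↦ by fin_cases hp <;> omega

lemma five_pow_sub_one_eq_twentyFour {k : ℕ} (hy : 5 ^ k - 1 ∈ factoredNumbers {2, 3, 5})
    (h6 : 6 ∣ 5 ^ k - 1) : 5 ^ k - 1 = 24 := by
  have ord6 : orderOf ((5 : ℕ) : ZMod 6) = 2 := (orderOf_eq_iff (by decide)).2 (by decide)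
  have ord9 : orderOf ((5 : ℕ) : ZMod 9) = 6 := (orderOf_eq_iff (by decide)).2 (by decide)
  have ord16 : orderOf ((5 : ℕ) : ZMod 16) = 4 := (orderOf_eq_iff (by decide)).2 (by decide)
  have h24 : 5 ^ 2 - 1 ∣ 5 ^ k - 1 := ord6 ▸ pow_orderOf_sub_one_dvd_pow_sub_one h6
  have h5 : ¬ 5 ∣ 5 ^ k - 1 := not_dvd_pow_sub_one_self hy.1
  have h9 : ¬ 9 ∣ 5 ^ k - 1 := not_dvd_pow_sub_one_of_orderOf_eq (q := 7) hy ord9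
    (by norm_num) (by decide) (by norm_num)
  have h16 : ¬ 16 ∣ 5 ^ k - 1 := not_dvd_pow_sub_one_of_orderOf_eq (q := 13) hy ord16
    (by norm_num) (by decide) (by norm_num)
  exact eq_of_dvd_of_mem_factoredNumbers hy h24 fun p hp ↦ by fin_cases hp <;> omega

lemma five_pow_add_one_eq_six {k : ℕ} (hy : 5 ^ k + 1 ∈ factoredNumbers {2, 3, 5})
    (h6 : 6 ∣ 5 ^ k + 1) : 5 ^ k + 1 = 6 := by
  have ord9 : orderOf ((5 : ℕ) : ZMod 9) = 2 * 3 := (orderOf_eq_iff (by decide)).2 (by decide)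
  have ord12 : orderOf ((5 : ℕ) : ZMod 12) = 2 * 1 := (orderOf_eq_iff (by decide)).2 (by decide)
  have h5 : ¬ 5 ∣ 5 ^ k + 1 := not_dvd_pow_add_one_self (by norm_num)
  have h9 : ¬ 9 ∣ 5 ^ k + 1 := not_dvd_pow_add_one_of_orderOf_eq (q := 7) hy (by norm_num)
    ord9 (by norm_num) (by decide) (by norm_num)
  have h12 : ¬ 12 ∣ 5 ^ k + 1 := fun h ↦
    absurd (dvd_pow_add_one_of_orderOf_eq (by norm_num) ord12 h) (by norm_num)
  exact eq_of_dvd_of_mem_factoredNumbers hy h6 fun p hp ↦ by fin_cases hp <;> omega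

lemma exists_eq_two_or_three_or_five_pow {x y : ℕ} (hx : x ∈ factoredNumbers {2, 3, 5})
    (hxy : x.Coprime y) (h : 15 ∣ y ∨ 10 ∣ y ∨ 6 ∣ y) :
    ∃ k, (x = 2 ^ k ∧ 15 ∣ y) ∨ (x = 3 ^ k ∧ 10 ∣ y) ∨ (x = 5 ^ k ∧ 6 ∣ y) := by
  rcases h with h | h | h
  · have hdvd : ∀ q ∈ ({2, 3, 5} : Finset ℕ), q ≠ 2 → q ∣ y := fun q hq _ ↦ by
      fin_cases hq <;> grind
    exact (exists_eq_pow_of_coprime hx hxy hdvd).imp fun k hk ↦ .inl ⟨hk, h⟩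
  · have hdvd : ∀ q ∈ ({2, 3, 5} : Finset ℕ), q ≠ 3 → q ∣ y := fun q hq _ ↦ by
      fin_cases hq <;> grind
    exact (exists_eq_pow_of_coprime hx hxy hdvd).imp fun k hk ↦ .inr (.inl ⟨hk, h⟩)
  · have hdvd : ∀ q ∈ ({2, 3, 5} : Finset ℕ), q ≠ 5 → q ∣ y := fun q hq _ ↦ by
      fin_cases hq <;> grind
    exact (exists_eq_pow_of_coprime hx hxy hdvd).imp fun k hk ↦ .inr (.inr ⟨hk, h⟩)

lemma fifteen_or_ten_or_six_dvd_of_thirty_dvd_mul {x y : ℕ} (h : 30 ∣ x * y) :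
    (15 ∣ x ∨ 10 ∣ x ∨ 6 ∣ x) ∨ (15 ∣ y ∨ 10 ∣ y ∨ 6 ∣ y) := by
  have h2 : 2 ∣ x ∨ 2 ∣ y := Nat.prime_two.dvd_mul.1 (dvd_trans (by norm_num) h)
  have h3 : 3 ∣ x ∨ 3 ∣ y := Nat.prime_three.dvd_mul.1 (dvd_trans (by norm_num) h)
  have h5 : 5 ∣ x ∨ 5 ∣ y := Nat.prime_five.dvd_mul.1 (dvd_trans (by norm_num) h)
  omega

lemma eq_five_or_nine_or_fifteen_or_twentyFour_or_eighty {m : ℕ}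
    (hm : m ∈ factoredNumbers {2, 3, 5}) (hm1 : m + 1 ∈ factoredNumbers {2, 3, 5})
    (h : 30 ∣ m * (m + 1)) :
    m = 5 ∨ m = 9 ∨ m = 15 ∨ m = 24 ∨ m = 80 := by
  have hcop : m.Coprime (m + 1) := by simp
  rcases fifteen_or_ten_or_six_dvd_of_thirty_dvd_mul h with h | h
  · obtain ⟨k, ⟨hk, h15⟩ | ⟨hk, h10⟩ | ⟨hk, h6⟩⟩ :=
      exists_eq_two_or_three_or_five_pow hm1 hcop.symm h
    · obtain rfl := Nat.eq_sub_of_add_eq hk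
      have := two_pow_sub_one_eq_fifteen hm h15
      omega
    · obtain rfl := Nat.eq_sub_of_add_eq hk
      have := three_pow_sub_one_eq_eighty hm h10
      omega
    · obtain rfl := Nat.eq_sub_of_add_eq hk
      have := five_pow_sub_one_eq_twentyFour hm h6
      omega
  · obtain ⟨k, ⟨rfl, h15⟩ | ⟨rfl, h10⟩ | ⟨rfl, h6⟩⟩ := exists_eq_two_or_three_or_five_pow hm hcop h
    · exact absurd h15 (not_fifteen_dvd_two_pow_add_one k)
    · have := three_pow_add_one_eq_ten hm1 h10
      omega
    · have := five_pow_add_one_eq_six hm1 h6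
      omega

end FactoredNumbers

lemma sq_two_mul_add_one_sub_one (m : ℕ) : (2 * m + 1) ^ 2 - 1 = 4 * (m * (m + 1)) := by
  rw [Nat.sub_eq_iff_eq_add (Nat.one_le_pow' _ _)]
  ring

lemma odd_of_even_sq_sub_one {n : ℕ} (hn : n ≠ 0) (h : Even (n ^ 2 - 1)) : Odd n := by
  rw [Nat.even_sub' (Nat.one_le_pow _ _ hn.bot_lt)] at h
  exact Nat.odd_pow_iff two_ne_zero |>.1 (h.2 odd_one)

/-- If `n` is a positive integer such that `n² - 1` is divisible by `2`, `3` and `5` and by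
no other prime, then `n ∈ {11, 19, 31, 49, 161}`. -/
theorem square_minus_one_235 (n : ℕ) (hn : 0 < n)
    (h2 : 2 ∣ n ^ 2 - 1) (h3 : 3 ∣ n ^ 2 - 1) (h5 : 5 ∣ n ^ 2 - 1)
    (hall : ∀ p : ℕ, p.Prime → p ∣ n ^ 2 - 1 → p = 2 ∨ p = 3 ∨ p = 5) :
    n = 11 ∨ n = 19 ∨ n = 31 ∨ n = 49 ∨ n = 161 := by
  obtain ⟨m, rfl⟩ := odd_of_even_sq_sub_one hn.ne' (even_iff_two_dvd.2 h2)
  have hsmooth : (2 * m + 1) ^ 2 - 1 ∈ Nat.factoredNumbers {2, 3, 5} :=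
    Nat.mem_factoredNumbers'.2 fun p hp hpn ↦ by simpa using hall p hp hpn
  rw [sq_two_mul_add_one_sub_one] at h3 h5 hsmooth
  have hm : m ∈ Nat.factoredNumbers {2, 3, 5} :=
    Nat.mem_factoredNumbers_of_dvd hsmooth ((dvd_mul_right m _).mul_left 4)
  have hm1 : m + 1 ∈ Nat.factoredNumbers {2, 3, 5} :=
    Nat.mem_factoredNumbers_of_dvd hsmooth ((dvd_mul_left _ m).mul_left 4)
  have h30 : 30 ∣ m * (m + 1) := by
    have := (Nat.even_mul_succ_self m).two_dvd
    omega
  have := eq_five_or_nine_or_fifteen_or_twentyFour_or_eighty hm hm1 h30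
  omega
end
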